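/- arXiv:2001.01224 — 7 statements merged into one kernel-verified Lean document; each statement's English description precedes it below -/
import Mathlib

section
/- Let H be a real Hilbert space and A : H → H a bounded linear operator that is compact and self-adjoint. Suppose u ∈ H with ‖u‖ = 1 and μ, β ∈ ℝ with β ≥ 0 satisfy ‖Au − μ u‖ ≤ β. Then for every d₀ > β there exists ũ ∈ H with ‖ũ‖ = 1 and ‖u − ũ‖ ≤ 2 d₀⁻¹ β, such that ũ belongs to the closure of the linear span of all eigenvectors of A whose eigenvalues lie in the interval [μ − d₀, μ + d₀]. -/
open RealInnerProductSpace

/-!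
Approximate `u` by a unit vector `x` that is a finite sum of eigenvectors, and let `w` be the sum of
the components of `x` whose eigenvalue `t` satisfies `|t - μ| ≤ d₀`. On the other components
`A - μ` expands by at least `d₀`, so the remainder `v = x - w` has `d₀ ‖v‖ ≤ ‖A x - μ x‖`. By
Pythagoras, normalizing `w` gives a unit vector within `√2 ‖v‖` of `x`. If `β > 0`, the gap
between `√2` and `2` absorbs the error made in replacing `u` by `x`; if `β = 0`, then `u` itself is
an eigenvector.
-/

open Filter Metric Module.End Topology

section Normalization

variable {𝕜 E : Type*} [RCLike 𝕜]

theorem exists_mem_norm_eq_one_of_dense_of_mem_nhds [NormedAddCommGroup E] [NormedSpace 𝕜 E]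
    {L : Submodule 𝕜 E} (hL : Dense (L : Set E)) {u : E} (hu : ‖u‖ = 1) {U : Set E}
    (hU : U ∈ 𝓝 u) : ∃ x ∈ L, ‖x‖ = 1 ∧ x ∈ U := by
  have hu0 : u ≠ 0 := norm_ne_zero_iff.1 (by simp [hu])
  have hnormalize : Tendsto (fun x : E => (‖x‖ : 𝕜)⁻¹ • x) (𝓝 u) (𝓝 u) := by
    have hcont : ContinuousAt (fun x : E => (‖x‖ : 𝕜)⁻¹ • x) u :=
      ((RCLike.continuous_ofReal.comp continuous_norm).continuousAt.inv₀
        (by simp [hu])).smul continuousAt_id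
    simpa [ContinuousAt, hu] using hcont
  obtain ⟨x, hxL, hxU, hx0⟩ :=
    hL.inter_nhds_nonempty (inter_mem (hnormalize hU) (isOpen_ne.mem_nhds hu0))
  exact ⟨(‖x‖ : 𝕜)⁻¹ • x, L.smul_mem _ hxL, norm_smul_inv_norm hx0, hxU⟩

theorem norm_add_sub_inv_norm_smul_le [NormedAddCommGroup E] [InnerProductSpace 𝕜 E] {w v : E}
    (hw : w ≠ 0) (horth : inner 𝕜 w v = 0) (hunit : ‖w + v‖ = 1) :
    ‖w + v - (‖w‖ : 𝕜)⁻¹ • w‖ ≤ √2 * ‖v‖ := by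
  have hpyth : ‖w‖ ^ 2 + ‖v‖ ^ 2 = 1 := by
    have := norm_add_sq_eq_norm_sq_add_norm_sq_of_inner_eq_zero w v horth
    rw [hunit] at this
    linarith
  have hradial : ‖(1 - (‖w‖ : 𝕜)⁻¹) • w‖ = |‖w‖ - 1| := by
    have hw' : ‖w‖ ≠ 0 := norm_ne_zero_iff.2 hw
    have hcast : 1 - (‖w‖ : 𝕜)⁻¹ = ((1 - ‖w‖⁻¹ : ℝ) : 𝕜) := by push_cast; rfl
    rw [hcast, norm_smul, RCLike.norm_ofReal, ← abs_norm w, ← abs_mul, abs_norm, sub_mul,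
      one_mul, inv_mul_cancel₀ hw']
  have hsq : ‖w + v - (‖w‖ : 𝕜)⁻¹ • w‖ ^ 2 = (‖w‖ - 1) ^ 2 + ‖v‖ ^ 2 := by
    have hsplit : w + v - (‖w‖ : 𝕜)⁻¹ • w = (1 - (‖w‖ : 𝕜)⁻¹) • w + v := by module
    rw [hsplit, sq, norm_add_sq_eq_norm_sq_add_norm_sq_of_inner_eq_zero (𝕜 := 𝕜) _ _
      (by rw [inner_smul_left, horth, mul_zero]), hradial, abs_mul_abs_self]
    ring
  refine le_of_sq_le_sq ?_ (by positivity)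
  rw [hsq, mul_pow, Real.sq_sqrt zero_le_two]
  nlinarith [norm_nonneg w, sq_nonneg ‖v‖]

end Normalization

section EigenvectorSpan

variable {R M : Type*} [CommRing R] [AddCommGroup M] [Module R M]

/-- The span of the eigenvectors of `T` whose eigenvalues lie in `S`: the algebraic spectral
subspace of `T` associated with `S`, no closure being taken. -/
def eigenvectorSpan (T : Module.End R M) (S : Set R) : Submodule R M :=
  Submodule.span R {v : M | v ≠ 0 ∧ ∃ t : R, T v = t • v ∧ t ∈ S}

theorem eigenspace_le_eigenvectorSpan {T : Module.End R M} {S : Set R} {t : R} (ht : t ∈ S) :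
    eigenspace T t ≤ eigenvectorSpan T S := by
  intro v hv
  rcases eq_or_ne v 0 with rfl | hv0
  · exact zero_mem _
  · exact Submodule.subset_span ⟨hv0, t, mem_eigenspace_iff.1 hv, ht⟩

end EigenvectorSpan

section OrthogonalEigenspaces

variable {𝕜 E : Type*} [RCLike 𝕜] [NormedAddCommGroup E] [InnerProductSpace 𝕜 E]
  {T : E →ₗ[𝕜] E}

theorem norm_sq_sum_of_mem_eigenspace
    (hT : OrthogonalFamily 𝕜 (fun t => eigenspace T t) fun t => (eigenspace T t).subtypeₗᵢ)
    {f : 𝕜 → E} (hf : ∀ t, f t ∈ eigenspace T t) (s : Finset 𝕜) :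
    ‖∑ t ∈ s, f t‖ ^ 2 = ∑ t ∈ s, ‖f t‖ ^ 2 :=
  hT.norm_sum (fun t => ⟨f t, hf t⟩) s

theorem norm_sq_map_sub_smul_sum_of_mem_eigenspace
    (hT : OrthogonalFamily 𝕜 (fun t => eigenspace T t) fun t => (eigenspace T t).subtypeₗᵢ)
    {f : 𝕜 → E} (hf : ∀ t, f t ∈ eigenspace T t) (s : Finset 𝕜) (μ : 𝕜) :
    ‖T (∑ t ∈ s, f t) - μ • ∑ t ∈ s, f t‖ ^ 2 = ∑ t ∈ s, ‖t - μ‖ ^ 2 * ‖f t‖ ^ 2 := by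
  have hdiag : T (∑ t ∈ s, f t) - μ • ∑ t ∈ s, f t = ∑ t ∈ s, (t - μ) • f t := by
    simp only [map_sum, Finset.smul_sum, ← Finset.sum_sub_distrib,
      mem_eigenspace_iff.1 (hf _), sub_smul]
  rw [hdiag, norm_sq_sum_of_mem_eigenspace hT fun t => Submodule.smul_mem _ (t - μ) (hf t)]
  simp only [norm_smul, mul_pow]

theorem exists_orthogonal_decomposition_of_mem_iSup_eigenspace
    (hT : OrthogonalFamily 𝕜 (fun t => eigenspace T t) fun t => (eigenspace T t).subtypeₗᵢ)
    {x : E} (hx : x ∈ ⨆ t, eigenspace T t) (μ : 𝕜) {d : ℝ} (hd : 0 ≤ d) :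
    ∃ w ∈ eigenvectorSpan T (closedBall μ d), ∃ v, w + v = x ∧ inner 𝕜 w v = 0 ∧
      d * ‖v‖ ≤ ‖T x - μ • x‖ := by
  classical
  obtain ⟨f, hf, rfl⟩ := (Submodule.mem_iSup_iff_exists_finsupp _ _).1 hx
  let near := f.support.filter (· ∈ closedBall μ d)
  let far := f.support.filter (· ∉ closedBall μ d)
  refine ⟨∑ t ∈ near, f t, ?_, ∑ t ∈ far, f t, ?_, ?_, ?_⟩
  · exact Submodule.sum_mem _ fun t ht =>
      eigenspace_le_eigenvectorSpan (Finset.mem_filter.1 ht).2 (hf t)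
  · exact Finset.sum_filter_add_sum_filter_not _ _ _
  · simp only [sum_inner, inner_sum]
    refine Finset.sum_eq_zero fun s hs => Finset.sum_eq_zero fun t ht => ?_
    have hne : t ≠ s := by
      rintro rfl
      exact (Finset.mem_filter.1 hs).2 (Finset.mem_filter.1 ht).2
    exact hT hne ⟨f t, hf t⟩ ⟨f s, hf s⟩
  · refine le_of_sq_le_sq ?_ (norm_nonneg _)
    calc (d * ‖∑ t ∈ far, f t‖) ^ 2 = ∑ t ∈ far, d ^ 2 * ‖f t‖ ^ 2 := by
          rw [mul_pow, norm_sq_sum_of_mem_eigenspace hT hf, Finset.mul_sum]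
      _ ≤ ∑ t ∈ far, ‖t - μ‖ ^ 2 * ‖f t‖ ^ 2 := by
          refine Finset.sum_le_sum fun t ht => ?_
          have hdt : d < ‖t - μ‖ := by
            simpa only [mem_closedBall_iff_norm, not_le] using (Finset.mem_filter.1 ht).2
          gcongr
      _ ≤ ∑ t ∈ f.support, ‖t - μ‖ ^ 2 * ‖f t‖ ^ 2 :=
          Finset.sum_le_sum_of_subset_of_nonneg (Finset.filter_subset _ _)
            fun _ _ _ => by positivity
      _ = ‖T (f.sum fun _ y => y) - μ • f.sum fun _ y => y‖ ^ 2 :=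
          (norm_sq_map_sub_smul_sum_of_mem_eigenspace hT hf _ μ).symm

theorem exists_unit_mem_eigenvectorSpan_of_mem_iSup_eigenspace
    (hT : OrthogonalFamily 𝕜 (fun t => eigenspace T t) fun t => (eigenspace T t).subtypeₗᵢ)
    {x : E} (hx : x ∈ ⨆ t, eigenspace T t) (hunit : ‖x‖ = 1) {μ : 𝕜} {d : ℝ}
    (hd : ‖T x - μ • x‖ < d) :
    ∃ y ∈ eigenvectorSpan T (closedBall μ d), ‖y‖ = 1 ∧
      ‖x - y‖ ≤ √2 * (‖T x - μ • x‖ / d) := by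
  have hd0 : 0 < d := (norm_nonneg _).trans_lt hd
  obtain ⟨w, hw, v, rfl, horth, hv⟩ :=
    exists_orthogonal_decomposition_of_mem_iSup_eigenspace hT hx μ hd0.le
  have hv' : ‖v‖ ≤ ‖T (w + v) - μ • (w + v)‖ / d := (le_div_iff₀' hd0).2 hv
  have hw0 : w ≠ 0 := by
    rintro rfl
    rw [zero_add] at hunit hv hd
    rw [hunit, mul_one] at hv
    exact hd.not_ge hv
  refine ⟨(‖w‖ : 𝕜)⁻¹ • w, Submodule.smul_mem _ _ hw, norm_smul_inv_norm hw0, ?_⟩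
  exact (norm_add_sub_inv_norm_smul_le hw0 horth hunit).trans (by gcongr)

end OrthogonalEigenspaces

theorem dense_iSup_eigenspace_of_isCompactOperator
    {𝕜 E : Type*} [RCLike 𝕜] [NormedAddCommGroup E] [InnerProductSpace 𝕜 E] [CompleteSpace E]
    {T : E →L[𝕜] E} (hcompact : IsCompactOperator T) (hsymm : T.IsSymmetric) :
    Dense ((⨆ t, eigenspace (T : E →ₗ[𝕜] E) t : Submodule 𝕜 E) : Set E) :=
  Submodule.dense_iff_topologicalClosure_eq_top.2 <|
    Submodule.topologicalClosure_eq_top_iff.2 <|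
      ContinuousLinearMap.orthogonalComplement_iSup_eigenspaces_eq_bot hcompact hsymm

theorem vishik_eigenvector_approximation_general
    {𝕜 E : Type*} [RCLike 𝕜] [NormedAddCommGroup E] [InnerProductSpace 𝕜 E] (T : E →L[𝕜] E)
    (hT : OrthogonalFamily 𝕜 (fun t => eigenspace (T : E →ₗ[𝕜] E) t)
      fun t => (eigenspace (T : E →ₗ[𝕜] E) t).subtypeₗᵢ)
    (hdense : Dense ((⨆ t, eigenspace (T : E →ₗ[𝕜] E) t : Submodule 𝕜 E) : Set E))
    {u : E} (hu : ‖u‖ = 1) {μ : 𝕜} {β d : ℝ} (happrox : ‖T u - μ • u‖ ≤ β) (hd : β < d) :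
    ∃ y : E, ‖y‖ = 1 ∧ ‖u - y‖ ≤ 2 * d⁻¹ * β ∧
      y ∈ eigenvectorSpan (T : E →ₗ[𝕜] E) (closedBall μ d) := by
  have hβ : 0 ≤ β := (norm_nonneg _).trans happrox
  have hd0 : 0 < d := hβ.trans_lt hd
  rcases hβ.eq_or_lt with rfl | hβ_pos
  · have hu_eigen : u ∈ eigenspace (T : E →ₗ[𝕜] E) μ :=
      mem_eigenspace_iff.2 (sub_eq_zero.1 (norm_le_zero_iff.1 happrox))
    exact ⟨u, hu, by simp, eigenspace_le_eigenvectorSpan (mem_closedBall_self hd0.le) hu_eigen⟩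
  have hresidual : ∀ᶠ x in 𝓝 u, ‖T x - μ • x‖ < d :=
    ContinuousAt.eventually_lt (by fun_prop) continuousAt_const (happrox.trans_lt hd)
  have herror : ∀ᶠ x in 𝓝 u, ‖u - x‖ + √2 * (‖T x - μ • x‖ / d) < 2 * d⁻¹ * β := by
    refine ContinuousAt.eventually_lt (by fun_prop) continuousAt_const ?_
    calc ‖u - u‖ + √2 * (‖T u - μ • u‖ / d) ≤ √2 * (β / d) := by
          rw [sub_self, norm_zero, zero_add]; gcongr
      _ < 2 * (β / d) := by gcongr; rw [Real.sqrt_lt' two_pos]; norm_num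
      _ = 2 * d⁻¹ * β := by ring
  obtain ⟨x, hxL, hx_unit, hx_residual, hx_error⟩ :=
    exists_mem_norm_eq_one_of_dense_of_mem_nhds hdense hu (hresidual.and herror)
  obtain ⟨y, hy, hy_unit, hxy⟩ :=
    exists_unit_mem_eigenvectorSpan_of_mem_iSup_eigenspace hT hxL hx_unit hx_residual
  refine ⟨y, hy_unit, ?_, hy⟩
  calc ‖u - y‖ ≤ ‖u - x‖ + ‖x - y‖ := norm_sub_le_norm_sub_add_norm_sub u x y
    _ ≤ ‖u - x‖ + √2 * (‖T x - μ • x‖ / d) := by gcongr; exact hxy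
    _ ≤ 2 * d⁻¹ * β := hx_error.le

/-- Vishik–Lyusternik lemma, second assertion: the normalized approximate
eigenvector `u` is `2 d₀⁻¹ β`-close to a normalized element of the closed span of
the eigenvectors of the compact self-adjoint operator `A` whose eigenvalues lie in
the segment `[μ - d₀, μ + d₀]`. -/
theorem vishik_eigenvector_approximation
    {H : Type*} [NormedAddCommGroup H] [InnerProductSpace ℝ H] [CompleteSpace H]
    (A : H →L[ℝ] H)
    (hcompact : IsCompactOperator (⇑A))
    (hsa : ∀ x y : H, ⟪A x, y⟫ = ⟪x, A y⟫)
    (u : H) (hu : ‖u‖ = 1)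
    (μ β : ℝ) (hβ0 : 0 ≤ β)
    (happrox : ‖A u - μ • u‖ ≤ β)
    (d₀ : ℝ) (hd₀ : β < d₀) :
    ∃ tu : H, ‖tu‖ = 1 ∧ ‖u - tu‖ ≤ 2 * d₀⁻¹ * β ∧
      tu ∈ closure (Submodule.span ℝ
        {v : H | v ≠ 0 ∧ ∃ t : ℝ, A v = t • v ∧ t ∈ Set.Icc (μ - d₀) (μ + d₀)} : Set H) := by
  obtain ⟨y, hy, huy, hmem⟩ := vishik_eigenvector_approximation_general A
    (LinearMap.IsSymmetric.orthogonalFamily_eigenspaces hsa)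
    (dense_iSup_eigenspace_of_isCompactOperator hcompact hsa) hu happrox hd₀
  exact ⟨y, hy, huy, subset_closure (Real.closedBall_eq_Icc ▸ hmem)⟩
end

section
/- Let (μ, (w₁, w₂, w₃)) and (μ, (v₁, v₂, v₃)) be eigenpairs of the limit spectral problem on the star graph with the same eigenvalue μ, and suppose w₁(0) ≠ 0. Then there exists c ∈ ℝ such that v_i(x) = c · w_i(x) for all x ∈ [0, ℓ_i] and i = 1,2,3. In particular, every eigenvalue possessing an eigenfunction that does not vanish at the vertex is simple. -/
open Set

/-- An eigenpair `(μ, (w₁, w₂, w₃))` of the limit spectral problem on the star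
graph. -/
def IsLimitEigenpair (ℓ : Fin 3 → ℝ) (h : Fin 3 → ℝ → ℝ) (μ : ℝ)
    (w : Fin 3 → ℝ → ℝ) : Prop :=
  (∀ i, ContDiff ℝ 2 (w i)) ∧
  (∃ i, ∃ x ∈ Icc 0 (ℓ i), w i x ≠ 0) ∧
  (∀ i, ∀ x ∈ Icc 0 (ℓ i),
      deriv (fun t => (h i t) ^ 2 * deriv (w i) t) x = -μ * (h i x) ^ 2 * w i x) ∧
  (∀ i, w i (ℓ i) = 0) ∧
  (w 0 0 = w 1 0 ∧ w 1 0 = w 2 0) ∧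
  (∑ i, (h i 0) ^ 2 * deriv (w i) 0 = 0)

/-!
On each edge, two solutions that vanish at the outer end are proportional: the combination of them
whose derivative also vanishes there has zero Cauchy data, hence is identically zero. The constant
of proportionality is the ratio of the values at the vertex, and continuity at the vertex makes this
ratio the same on all edges.
-/

section LinearODE

variable {E : Type*} [NormedAddCommGroup E] [NormedSpace ℝ E]

lemma eqOn_zero_of_hasDerivWithinAt_clm_apply_of_right {A : ℝ → E →L[ℝ] E} {y : ℝ → E} {a b : ℝ}
    (hA : ContinuousOn A (Icc a b))
    (hy : ∀ x ∈ Icc a b, HasDerivWithinAt y (A x (y x)) (Icc a b) x) (hyb : y b = 0) :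
    EqOn y 0 (Icc a b) := by
  obtain ⟨K, hK⟩ := isCompact_Icc.exists_bound_of_continuousOn hA
  have lipschitz : ∀ x ∈ Ioc a b, LipschitzOnWith K.toNNReal (A x) univ := fun x hx ↦
    ((A x).lipschitz.weaken
      (NNReal.le_toNNReal_of_coe_le (hK x (Ioc_subset_Icc_self hx)))).lipschitzOnWith
  refine ODE_solution_unique_of_mem_Icc_left (s := fun _ ↦ univ) lipschitz
    (fun x hx ↦ (hy x hx).continuousWithinAt) (fun x hx ↦ ?_) (fun _ _ ↦ mem_univ _)
    continuousOn_const (fun x _ ↦ ?_) (fun _ _ ↦ mem_univ _) hyb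
  · exact (hy x (Ioc_subset_Icc_self hx)).mono_of_mem_nhdsWithin (Icc_mem_nhdsLE_of_mem hx)
  · exact (hasDerivWithinAt_const x (Iic x) (0 : E)).congr_deriv (map_zero (A x)).symm

end LinearODE

/-- `u` solves the Sturm–Liouville equation `(p u')' = q u` on `s`. Derivatives are taken within
`s`, so they are one-sided at the endpoints when `s` is a compact interval. -/
structure IsSturmLiouvilleSolutionOn (p q u : ℝ → ℝ) (s : Set ℝ) : Prop where
  differentiableOn : DifferentiableOn ℝ u s
  hasDerivWithinAt_flux :
    ∀ x ∈ s, HasDerivWithinAt (fun t ↦ p t * derivWithin u s t) (q x * u x) s x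

lemma isSturmLiouvilleSolutionOn_of_deriv_eq {p q u : ℝ → ℝ} {s : Set ℝ}
    (hs : UniqueDiffOn ℝ s) (hp : Differentiable ℝ p) (hu : ContDiff ℝ 2 u)
    (eqn : ∀ x ∈ s, deriv (fun t ↦ p t * deriv u t) x = q x * u x) :
    IsSturmLiouvilleSolutionOn p q u s := by
  have hu' : Differentiable ℝ u := hu.differentiable two_ne_zero
  have derivWithin_eq : ∀ x ∈ s, derivWithin u s x = deriv u x := fun x hx ↦
    (hu' x).derivWithin (hs x hx)
  refine ⟨hu'.differentiableOn, fun x hx ↦ ?_⟩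
  have flux : HasDerivAt (fun t ↦ p t * deriv u t) (q x * u x) x :=
    eqn x hx ▸ ((hp x).mul (hu.differentiable_deriv_two x)).hasDerivAt
  exact flux.hasDerivWithinAt.congr_of_mem (fun t ht ↦ by rw [derivWithin_eq t ht]) hx

namespace IsSturmLiouvilleSolutionOn

variable {p q u v : ℝ → ℝ} {s : Set ℝ} {a b : ℝ}

lemma const_mul (hu : IsSturmLiouvilleSolutionOn p q u s) (c : ℝ) :
    IsSturmLiouvilleSolutionOn p q (fun x ↦ c * u x) s where
  differentiableOn := hu.differentiableOn.const_mul c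
  hasDerivWithinAt_flux x hx := by
    refine (((hu.hasDerivWithinAt_flux x hx).const_mul c).congr_deriv (by ring)).congr_of_mem
      (fun t ht ↦ ?_) hx
    rw [derivWithin_const_mul c (hu.differentiableOn t ht)]
    ring

lemma sub (hu : IsSturmLiouvilleSolutionOn p q u s) (hv : IsSturmLiouvilleSolutionOn p q v s) :
    IsSturmLiouvilleSolutionOn p q (fun x ↦ u x - v x) s where
  differentiableOn := hu.differentiableOn.sub hv.differentiableOn
  hasDerivWithinAt_flux x hx := by
    refine (((hu.hasDerivWithinAt_flux x hx).fun_sub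
      (hv.hasDerivWithinAt_flux x hx)).congr_deriv (by ring)).congr_of_mem (fun t ht ↦ ?_) hx
    rw [derivWithin_fun_sub (hu.differentiableOn t ht) (hv.differentiableOn t ht), mul_sub]

lemma eqOn_zero_of_right_eq_zero (hu : IsSturmLiouvilleSolutionOn p q u (Icc a b))
    (hp : ContinuousOn p (Icc a b)) (hp0 : ∀ x ∈ Icc a b, p x ≠ 0)
    (hq : ContinuousOn q (Icc a b))
    (hub : u b = 0) (hub' : derivWithin u (Icc a b) b = 0) : EqOn u 0 (Icc a b) := by
  -- The pair `(u, p u')` solves the first-order system `y₁' = y₂ / p`, `y₂' = q y₁`.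
  let A (x : ℝ) : ℝ × ℝ →L[ℝ] ℝ × ℝ :=
    (p x)⁻¹ • (.inl ℝ ℝ ℝ ∘L .snd ℝ ℝ ℝ) + q x • (.inr ℝ ℝ ℝ ∘L .fst ℝ ℝ ℝ)
  let y (x : ℝ) : ℝ × ℝ := (u x, p x * derivWithin u (Icc a b) x)
  have hA : ContinuousOn A (Icc a b) :=
    ((hp.inv₀ hp0).smul continuousOn_const).add (hq.smul continuousOn_const)
  have hy : ∀ x ∈ Icc a b, HasDerivWithinAt y (A x (y x)) (Icc a b) x := fun x hx ↦
    ((hu.differentiableOn x hx).hasDerivWithinAt.prodMk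
      (hu.hasDerivWithinAt_flux x hx)).congr_deriv (by simp [A, y, hp0 x hx])
  have hyb : y b = 0 := by simp [y, hub, hub']
  exact fun x hx ↦ congrArg Prod.fst
    (eqOn_zero_of_hasDerivWithinAt_clm_apply_of_right hA hy hyb hx)

lemma derivWithin_mul_eq_derivWithin_mul (hu : IsSturmLiouvilleSolutionOn p q u (Icc a b))
    (hv : IsSturmLiouvilleSolutionOn p q v (Icc a b))
    (hp : ContinuousOn p (Icc a b)) (hp0 : ∀ x ∈ Icc a b, p x ≠ 0)
    (hq : ContinuousOn q (Icc a b)) (hub : u b = 0) (hvb : v b = 0) {x : ℝ} (hx : x ∈ Icc a b) :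
    derivWithin u (Icc a b) b * v x = derivWithin v (Icc a b) b * u x := by
  have hb : b ∈ Icc a b := right_mem_Icc.2 (hx.1.trans hx.2)
  have hu' := hu.const_mul (derivWithin v (Icc a b) b)
  have hv' := hv.const_mul (derivWithin u (Icc a b) b)
  refine sub_eq_zero.1
    ((hv'.sub hu').eqOn_zero_of_right_eq_zero hp hp0 hq (by simp [hub, hvb]) ?_ hx)
  rw [derivWithin_fun_sub (hv'.differentiableOn b hb) (hu'.differentiableOn b hb),
    derivWithin_const_mul _ (hv.differentiableOn b hb),
    derivWithin_const_mul _ (hu.differentiableOn b hb)]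
  ring

lemma mul_eq_mul_of_right_eq_zero (hu : IsSturmLiouvilleSolutionOn p q u (Icc a b))
    (hv : IsSturmLiouvilleSolutionOn p q v (Icc a b))
    (hp : ContinuousOn p (Icc a b)) (hp0 : ∀ x ∈ Icc a b, p x ≠ 0)
    (hq : ContinuousOn q (Icc a b)) (hub : u b = 0) (hvb : v b = 0)
    {x y : ℝ} (hx : x ∈ Icc a b) (hy : y ∈ Icc a b) : u x * v y = u y * v x := by
  have proportional {t : ℝ} (ht : t ∈ Icc a b) :=
    hu.derivWithin_mul_eq_derivWithin_mul hv hp hp0 hq hub hvb ht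
  by_cases hub' : derivWithin u (Icc a b) b = 0
  · have hu0 := hu.eqOn_zero_of_right_eq_zero hp hp0 hq hub hub'
    simp [hu0 hx, hu0 hy]
  · refine mul_left_cancel₀ hub' ?_
    linear_combination u x * proportional hy - u y * proportional hx

end IsSturmLiouvilleSolutionOn

theorem limit_eigenvalue_simple_general {ι : Type*} {ℓ : ι → ℝ} {p q w v : ι → ℝ → ℝ} {α β : ℝ}
    (hp : ∀ i, ContinuousOn (p i) (Icc 0 (ℓ i))) (hp0 : ∀ i, ∀ x ∈ Icc 0 (ℓ i), p i x ≠ 0)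
    (hq : ∀ i, ContinuousOn (q i) (Icc 0 (ℓ i)))
    (hw : ∀ i, IsSturmLiouvilleSolutionOn (p i) (q i) (w i) (Icc 0 (ℓ i)))
    (hv : ∀ i, IsSturmLiouvilleSolutionOn (p i) (q i) (v i) (Icc 0 (ℓ i)))
    (hwℓ : ∀ i, w i (ℓ i) = 0) (hvℓ : ∀ i, v i (ℓ i) = 0)
    (hwα : ∀ i, w i 0 = α) (hvβ : ∀ i, v i 0 = β) (hα : α ≠ 0) :
    ∃ c : ℝ, ∀ i, ∀ x ∈ Icc 0 (ℓ i), v i x = c * w i x := by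
  refine ⟨β / α, fun i x hx ↦ ?_⟩
  have cross : w i 0 * v i x = w i x * v i 0 :=
    (hw i).mul_eq_mul_of_right_eq_zero (hv i) (hp i) (hp0 i) (hq i) (hwℓ i) (hvℓ i)
      (left_mem_Icc.2 (hx.1.trans hx.2)) hx
  rw [hwα, hvβ] at cross
  field_simp
  linear_combination cross

namespace IsLimitEigenpair

variable {ℓ : Fin 3 → ℝ} {h w : Fin 3 → ℝ → ℝ} {μ : ℝ}

lemma isSturmLiouvilleSolutionOn (hw : IsLimitEigenpair ℓ h μ w) {i : Fin 3} (hℓ : 0 < ℓ i)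
    (hh : Differentiable ℝ (h i)) :
    IsSturmLiouvilleSolutionOn (fun x ↦ h i x ^ 2) (fun x ↦ -μ * h i x ^ 2) (w i)
      (Icc 0 (ℓ i)) :=
  isSturmLiouvilleSolutionOn_of_deriv_eq (uniqueDiffOn_Icc hℓ) (hh.pow 2) (hw.1 i) (hw.2.2.1 i)

lemma apply_length (hw : IsLimitEigenpair ℓ h μ w) (i : Fin 3) : w i (ℓ i) = 0 :=
  hw.2.2.2.1 i

lemma apply_vertex (hw : IsLimitEigenpair ℓ h μ w) (i : Fin 3) : w i 0 = w 0 0 := by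
  obtain ⟨h01, h12⟩ := hw.2.2.2.2.1
  fin_cases i
  exacts [rfl, h01.symm, (h01.trans h12).symm]

end IsLimitEigenpair

/-- Every eigenvalue of the limit spectral problem possessing an eigenfunction not
vanishing at the vertex is simple: two eigenfunctions with the same eigenvalue are
proportional on the graph. -/
theorem limit_eigenvalue_simple
    (ℓ : Fin 3 → ℝ) (h : Fin 3 → ℝ → ℝ)
    (hℓ : ∀ i, 0 < ℓ i)
    (hh : ∀ i, ContDiff ℝ 1 (h i))
    (hhpos : ∀ i, ∀ x ∈ Icc 0 (ℓ i), 0 < h i x)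
    (μ : ℝ) (w v : Fin 3 → ℝ → ℝ)
    (hw : IsLimitEigenpair ℓ h μ w)
    (hv : IsLimitEigenpair ℓ h μ v)
    (hw0 : w 0 0 ≠ 0) :
    ∃ c : ℝ, ∀ i, ∀ x ∈ Icc 0 (ℓ i), v i x = c * w i x := by
  have hh' i : Differentiable ℝ (h i) := (hh i).differentiable one_ne_zero
  exact limit_eigenvalue_simple_general
    (fun i ↦ ((hh i).continuous.pow 2).continuousOn)
    (fun i x hx ↦ pow_ne_zero 2 (hhpos i x hx).ne')
    (fun i ↦ (continuous_const.mul ((hh i).continuous.pow 2)).continuousOn)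
    (fun i ↦ hw.isSturmLiouvilleSolutionOn (hℓ i) (hh' i))
    (fun i ↦ hv.isSturmLiouvilleSolutionOn (hℓ i) (hh' i))
    hw.apply_length hv.apply_length hw.apply_vertex hv.apply_vertex hw0
end

section
/- Let (μ₀, (w₁, w₂, w₃)) be an eigenpair of the limit spectral problem on the star graph. Let Φ_i : [0, ℓ_i] → ℝ be continuous (i = 1,2,3), and let D, ν ∈ ℝ. Suppose φ_i : [0, ℓ_i] → ℝ are twice continuously differentiable and satisfy: −(h_i² φ_i′)′(x) − μ₀ h_i(x)² φ_i(x) = Φ_i(x) + ν h_i(x)² w_i(x) on [0, ℓ_i]; φ_i(ℓ_i) = 0; φ₁(0) = φ₂(0) = φ₃(0); and Σ_{i=1}^{3} h_i(0)² φ_i′(0) = D. Then Σ_{i=1}^{3} ∫₀^{ℓ_i} Φ_i(x) w_i(x) dx − D · w₁(0) + ν Σ_{i=1}^{3} ∫₀^{ℓ_i} h_i(x)² w_i(x)² dx = 0. -/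
open Set

/-!
For solutions `u`, `v` of `-(p u')' - μ ρ u = f` and `-(p v')' - μ ρ v = g`, the weighted Wronskian
`p (u v' - u' v)` has derivative `f v - g u`. Integrating along each edge of the star and summing,
the Dirichlet conditions kill the contributions of the outer ends, and continuity at the vertex
leaves only the total fluxes there multiplied by the common vertex values. For `u = φ` and `v = w`
an eigenfunction, this is the compatibility relation.
-/

open MeasureTheory

/-- `u` is a classical solution on `s` of the Sturm–Liouville equation `-(p u')' - μ ρ u = f`.
Derivatives are two-sided at every point of `s`, and the flux `p u'` is required to be
differentiable as a whole, without assuming that `p` or `u'` is. -/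
structure IsSturmLiouvilleSolution (p ρ : ℝ → ℝ) (μ : ℝ) (f u : ℝ → ℝ) (s : Set ℝ) : Prop where
  differentiableAt : ∀ x ∈ s, DifferentiableAt ℝ u x
  differentiableAt_flux : ∀ x ∈ s, DifferentiableAt ℝ (fun t => p t * deriv u t) x
  equation : ∀ x ∈ s, -deriv (fun t => p t * deriv u t) x - μ * ρ x * u x = f x

/-- The Wronskian of `u` and `v` multiplied by the leading coefficient `p` of a Sturm–Liouville
operator; it is the boundary term in Green's second identity. -/
noncomputable def weightedWronskian (p u v : ℝ → ℝ) (x : ℝ) : ℝ :=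
  u x * (p x * deriv v x) - v x * (p x * deriv u x)

theorem weightedWronskian_eq_zero_of_eq_zero {p u v : ℝ → ℝ} {x : ℝ} (hu : u x = 0)
    (hv : v x = 0) : weightedWronskian p u v x = 0 := by
  simp [weightedWronskian, hu, hv]

namespace IsSturmLiouvilleSolution

variable {p ρ f g u v : ℝ → ℝ} {μ a b x : ℝ} {s : Set ℝ}

theorem of_contDiff (hp : ContDiff ℝ 1 p) (hu : ContDiff ℝ 2 u)
    (heq : ∀ x ∈ s, -deriv (fun t => p t * deriv u t) x - μ * ρ x * u x = f x) :
    IsSturmLiouvilleSolution p ρ μ f u s where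
  differentiableAt x _ := hu.differentiable two_ne_zero x
  differentiableAt_flux x _ :=
    (hp.differentiable one_ne_zero x).mul (hu.differentiable_deriv_two x)
  equation := heq

theorem continuousOn (hu : IsSturmLiouvilleSolution p ρ μ f u s) : ContinuousOn u s :=
  fun x hx => (hu.differentiableAt x hx).continuousAt.continuousWithinAt

theorem hasDerivAt_flux (hu : IsSturmLiouvilleSolution p ρ μ f u s) (hx : x ∈ s) :
    HasDerivAt (fun t => p t * deriv u t) (-(f x + μ * ρ x * u x)) x :=
  (hu.differentiableAt_flux x hx).hasDerivAt.congr_deriv (by linarith [hu.equation x hx])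

theorem hasDerivAt_weightedWronskian (hu : IsSturmLiouvilleSolution p ρ μ f u s)
    (hv : IsSturmLiouvilleSolution p ρ μ g v s) (hx : x ∈ s) :
    HasDerivAt (weightedWronskian p u v) (f x * v x - g x * u x) x :=
  (((hu.differentiableAt x hx).hasDerivAt.mul (hv.hasDerivAt_flux hx)).sub
    ((hv.differentiableAt x hx).hasDerivAt.mul (hu.hasDerivAt_flux hx))).congr_deriv (by ring)

theorem integral_eq_weightedWronskian_sub (hu : IsSturmLiouvilleSolution p ρ μ f u (uIcc a b))
    (hv : IsSturmLiouvilleSolution p ρ μ g v (uIcc a b))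
    (hint : IntervalIntegrable (fun x => f x * v x - g x * u x) volume a b) :
    ∫ x in a..b, (f x * v x - g x * u x) =
      weightedWronskian p u v b - weightedWronskian p u v a :=
  intervalIntegral.integral_eq_sub_of_hasDerivAt
    (fun _ hx => hu.hasDerivAt_weightedWronskian hv hx) hint

end IsSturmLiouvilleSolution

section StarGraph

variable {ι : Type*} [Fintype ι] {ℓ : ι → ℝ} {p ρ : ι → ℝ → ℝ} {μ : ℝ}

theorem sum_weightedWronskian_vertex {u v : ι → ℝ → ℝ} {x c d : ℝ} (hu : ∀ i, u i x = c)
    (hv : ∀ i, v i x = d) :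
    ∑ i, weightedWronskian (p i) (u i) (v i) x =
      c * ∑ i, p i x * deriv (v i) x - d * ∑ i, p i x * deriv (u i) x := by
  simp only [weightedWronskian, hu, hv, Finset.sum_sub_distrib, Finset.mul_sum]

theorem sum_integral_eq_vertex_flux {f g u v : ι → ℝ → ℝ} {c d : ℝ}
    (hu : ∀ i, IsSturmLiouvilleSolution (p i) (ρ i) μ (f i) (u i) (uIcc 0 (ℓ i)))
    (hv : ∀ i, IsSturmLiouvilleSolution (p i) (ρ i) μ (g i) (v i) (uIcc 0 (ℓ i)))
    (hint : ∀ i, IntervalIntegrable (fun x => f i x * v i x - g i x * u i x) volume 0 (ℓ i))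
    (hu_end : ∀ i, u i (ℓ i) = 0) (hv_end : ∀ i, v i (ℓ i) = 0)
    (hu_vertex : ∀ i, u i 0 = c) (hv_vertex : ∀ i, v i 0 = d) :
    ∑ i, ∫ x in 0..ℓ i, (f i x * v i x - g i x * u i x) =
      d * ∑ i, p i 0 * deriv (u i) 0 - c * ∑ i, p i 0 * deriv (v i) 0 :=
  calc ∑ i, ∫ x in 0..ℓ i, (f i x * v i x - g i x * u i x)
      = ∑ i, -weightedWronskian (p i) (u i) (v i) 0 :=
        Finset.sum_congr rfl fun i _ => by
          rw [(hu i).integral_eq_weightedWronskian_sub (hv i) (hint i),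
            weightedWronskian_eq_zero_of_eq_zero (hu_end i) (hv_end i), zero_sub]
    _ = _ := by
        rw [Finset.sum_neg_distrib, sum_weightedWronskian_vertex hu_vertex hv_vertex, neg_sub]

theorem limit_fredholm_compatibility_general {w φ Φ : ι → ℝ → ℝ} {D ν c d : ℝ}
    (hℓ : ∀ i, 0 ≤ ℓ i)
    (hρ : ∀ i, IntervalIntegrable (ρ i) volume 0 (ℓ i))
    (hΦ : ∀ i, IntervalIntegrable (Φ i) volume 0 (ℓ i))
    (hw : ∀ i, IsSturmLiouvilleSolution (p i) (ρ i) μ 0 (w i) (Icc 0 (ℓ i)))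
    (hφ : ∀ i, IsSturmLiouvilleSolution (p i) (ρ i) μ (fun x => Φ i x + ν * ρ i x * w i x) (φ i)
      (Icc 0 (ℓ i)))
    (hw_end : ∀ i, w i (ℓ i) = 0) (hφ_end : ∀ i, φ i (ℓ i) = 0)
    (hw_vertex : ∀ i, w i 0 = c) (hφ_vertex : ∀ i, φ i 0 = d)
    (hw_flux : ∑ i, p i 0 * deriv (w i) 0 = 0) (hφ_flux : ∑ i, p i 0 * deriv (φ i) 0 = D) :
    (∑ i, ∫ x in 0..ℓ i, Φ i x * w i x) - D * c
      + ν * (∑ i, ∫ x in 0..ℓ i, ρ i x * w i x ^ 2) = 0 := by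
  simp only [← uIcc_of_le (hℓ _)] at hw hφ
  have hw_cont i : ContinuousOn (w i) (uIcc 0 (ℓ i)) := (hw i).continuousOn
  have hΦw i : IntervalIntegrable (fun x => Φ i x * w i x) volume 0 (ℓ i) :=
    (hΦ i).mul_continuousOn (hw_cont i)
  have hρw i : IntervalIntegrable (fun x => ν * (ρ i x * w i x ^ 2)) volume 0 (ℓ i) :=
    ((hρ i).mul_continuousOn ((hw_cont i).pow 2)).const_mul ν
  have hsplit i : (fun x => (Φ i x + ν * ρ i x * w i x) * w i x - (0 : ℝ → ℝ) x * φ i x) =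
      fun x => Φ i x * w i x + ν * (ρ i x * w i x ^ 2) := by
    funext x
    rw [Pi.zero_apply]
    ring
  have green := sum_integral_eq_vertex_flux hφ hw
    (fun i => hsplit i ▸ (hΦw i).add (hρw i)) hφ_end hw_end hφ_vertex hw_vertex
  simp only [hsplit, intervalIntegral.integral_add (hΦw _) (hρw _),
    intervalIntegral.integral_const_mul, Finset.sum_add_distrib, ← Finset.mul_sum, hw_flux,
    hφ_flux] at green
  linear_combination green

end StarGraph

/-- Fredholm compatibility condition for the inhomogeneous problem at the
eigenvalue `μ₀` of the limit spectral problem: any solution `(φ₁, φ₂, φ₃)` of the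
inhomogeneous problem with right-hand sides `Φ_i + ν h_i² w_i` and vertex flux `D`
forces the compatibility relation determining `ν`. -/
theorem limit_fredholm_compatibility
    (ℓ : Fin 3 → ℝ) (h : Fin 3 → ℝ → ℝ)
    (hℓ : ∀ i, 0 < ℓ i)
    (hh : ∀ i, ContDiff ℝ 1 (h i))
    (hhpos : ∀ i, ∀ x ∈ Icc 0 (ℓ i), 0 < h i x)
    (μ₀ : ℝ) (w : Fin 3 → ℝ → ℝ)
    (hw : IsLimitEigenpair ℓ h μ₀ w)
    (Φ : Fin 3 → ℝ → ℝ) (hΦ : ∀ i, ContinuousOn (Φ i) (Icc 0 (ℓ i)))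
    (D ν : ℝ) (φ : Fin 3 → ℝ → ℝ)
    (hφreg : ∀ i, ContDiff ℝ 2 (φ i))
    (hode : ∀ i, ∀ x ∈ Icc 0 (ℓ i),
      -(deriv (fun t => (h i t) ^ 2 * deriv (φ i) t) x) - μ₀ * (h i x) ^ 2 * φ i x
        = Φ i x + ν * (h i x) ^ 2 * w i x)
    (hbc : ∀ i, φ i (ℓ i) = 0)
    (hvertex : φ 0 0 = φ 1 0 ∧ φ 1 0 = φ 2 0)
    (hkirchhoff : ∑ i, (h i 0) ^ 2 * deriv (φ i) 0 = D) :
    (∑ i, ∫ x in (0 : ℝ)..(ℓ i), Φ i x * w i x) - D * w 0 0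
      + ν * (∑ i, ∫ x in (0 : ℝ)..(ℓ i), (h i x) ^ 2 * (w i x) ^ 2) = 0 := by
  obtain ⟨hw_reg, -, hw_ode, hw_end, ⟨hw_01, hw_12⟩, hw_flux⟩ := hw
  have hp i : ContDiff ℝ 1 (fun x => h i x ^ 2) := (hh i).pow 2
  exact limit_fredholm_compatibility_general (fun i => (hℓ i).le)
    (fun i => (hp i).continuous.intervalIntegrable 0 (ℓ i))
    (fun i => (hΦ i).intervalIntegrable_of_Icc (hℓ i).le)
    (fun i => .of_contDiff (hp i) (hw_reg i) fun x hx => by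
      rw [hw_ode i x hx, Pi.zero_apply]
      ring)
    (fun i => .of_contDiff (hp i) (hφreg i) (hode i)) hw_end hbc
    (by simp [Fin.forall_fin_succ, hw_01, hw_12])
    (by simp [Fin.forall_fin_succ, hvertex.1, hvertex.2] : ∀ i, φ i 0 = φ 0 0) hw_flux hkirchhoff
end

section
/- Let (μ₀, (w₁, w₂, w₃)) be an eigenpair of the limit spectral problem on the star graph with w₁(0) ≠ 0. Let Φ_i : [0, ℓ_i] → ℝ be continuous (i = 1,2,3) and D ∈ ℝ. Then there exist a unique ν ∈ ℝ and unique twice continuously differentiable functions φ_i : [0, ℓ_i] → ℝ (i = 1,2,3) such that: −(h_i² φ_i′)′(x) − μ₀ h_i(x)² φ_i(x) = Φ_i(x) + ν h_i(x)² w_i(x) on [0, ℓ_i]; φ_i(ℓ_i) = 0; φ₁(0) = φ₂(0) = φ₃(0); Σ_{i=1}^{3} h_i(0)² φ_i′(0) = D; and Σ_{i=1}^{3} ∫₀^{ℓ_i} h_i(x)² φ_i(x) w_i(x) dx = 0. -/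
open Set

/-- `(ν, φ)` solves the inhomogeneous limit problem with data `(Φ, D)` at the
eigenpair `(μ₀, w)`, with `φ` orthogonal to the eigenfunction `w`. -/
def SolvesInhom (ℓ : Fin 3 → ℝ) (h : Fin 3 → ℝ → ℝ) (μ₀ : ℝ)
    (w Φ : Fin 3 → ℝ → ℝ) (D : ℝ) (ν : ℝ) (φ : Fin 3 → ℝ → ℝ) : Prop :=
  (∀ i, ContDiff ℝ 2 (φ i)) ∧
  (∀ i, ∀ x ∈ Icc 0 (ℓ i),
      -(deriv (fun t => (h i t) ^ 2 * deriv (φ i) t) x) - μ₀ * (h i x) ^ 2 * φ i x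
        = Φ i x + ν * (h i x) ^ 2 * w i x) ∧
  (∀ i, φ i (ℓ i) = 0) ∧
  (φ 0 0 = φ 1 0 ∧ φ 1 0 = φ 2 0) ∧
  (∑ i, (h i 0) ^ 2 * deriv (φ i) 0 = D) ∧
  (∑ i, ∫ x in (0 : ℝ)..(ℓ i), (h i x) ^ 2 * φ i x * w i x = 0)

/-!
Write `-(p u')' + q u = F` as the system `u' = v / p`, `v' = q u - F`. If `(w, z)` solves the
homogeneous system and is nonzero at one point, then it never vanishes, so `(u, v)` can be expanded
in the orthogonal frame `(w, z)`, `(-z, w)`. The second coordinate is the Wronskian `w v - z u`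
divided by `w² + z²`; since the Wronskian has derivative `-F w`, it is a quadrature, and the
derivative of the first coordinate involves only the Wronskian and `F`. Hence every edge equation
is solved by two quadratures (Rofe-Beketov's formula), and homogeneous solutions vanishing at the
outer end of an edge are multiples of `w`.

Integrating the Wronskian along the edges of the star and summing gives `∑ ∫ Fᵢ wᵢ = D w(0)` as a
necessary condition for solvability. It is also sufficient: as `w(0) ≠ 0`, subtracting multiples of
`wᵢ` makes the edge solutions agree at the vertex, and the condition then forces the total flux to
be `D`. For `F = Φ + ν r w` the condition determines `ν`, and orthogonality to `w` selects one
solution among those differing by a multiple of `w`.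
-/

section Calculus

variable {a b : ℝ} {f f' : ℝ → ℝ}

theorem exists_primitive_eq_zero_of_continuousOn_Icc (hab : a ≤ b) (hf : ContinuousOn f (Icc a b))
    (c : ℝ) : ∃ g : ℝ → ℝ, g c = 0 ∧ ∀ x ∈ Icc a b, HasDerivWithinAt g (f x) (Icc a b) x := by
  have hcont : Continuous (IccExtend hab ((Icc a b).domRestrict f)) := hf.domRestrict.Icc_extend'
  refine ⟨fun x => ∫ t in c..x, IccExtend hab ((Icc a b).domRestrict f) t,
    intervalIntegral.integral_same, fun x hx => ?_⟩
  have hderiv := (hcont.integral_hasStrictDerivAt c x).hasDerivAt.hasDerivWithinAt (s := Icc a b)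
  rwa [IccExtend_of_mem hab _ hx] at hderiv

theorem exists_contDiff_eqOn_Icc_of_contDiffOn (hab : a < b) (n : ℕ)
    (hf : ContDiffOn ℝ n f (Icc a b)) : ∃ g : ℝ → ℝ, ContDiff ℝ n g ∧ EqOn g f (Icc a b) := by
  induction n generalizing f with
  | zero =>
    refine ⟨IccExtend hab.le ((Icc a b).domRestrict f), ?_,
      fun x hx => IccExtend_of_mem hab.le _ hx⟩
    simpa only [CharP.cast_eq_zero, contDiff_zero] using hf.continuousOn.domRestrict.Icc_extend'
  | succ n ih =>
    have huniq := uniqueDiffOn_Icc hab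
    push_cast at hf ⊢
    obtain ⟨hdiff, -, hderiv⟩ := (contDiffOn_succ_iff_derivWithin huniq).1 hf
    obtain ⟨g', hg', heq⟩ := ih hderiv
    have hg : ∀ x, HasDerivAt (fun x => f a + ∫ t in a..x, g' t) (g' x) x := fun x =>
      (hg'.continuous.integral_hasStrictDerivAt a x).hasDerivAt.const_add _
    refine ⟨fun x => f a + ∫ t in a..x, g' t, ?_, ?_⟩
    · refine contDiff_succ_iff_deriv.2 ⟨fun x => (hg x).differentiableAt, by simp, ?_⟩
      rwa [funext fun x => (hg x).deriv]
    · refine eq_of_derivWithin_eq (fun x _ => (hg x).differentiableAt.differentiableWithinAt) hdiff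
        (fun x hx => ?_) (by simp)
      rw [(hg x).hasDerivWithinAt.derivWithin (huniq x (Ico_subset_Icc_self hx)),
        heq (Ico_subset_Icc_self hx)]

theorem pos_of_neg_mul_le_deriv {C : ℝ}
    (hderiv : ∀ x ∈ Icc a b, HasDerivWithinAt f (f' x) (Icc a b) x)
    (hbound : ∀ x ∈ Icc a b, -C * f x ≤ f' x) (ha : 0 < f a) : ∀ x ∈ Icc a b, 0 < f x := by
  intro x hx
  have hexp (y : ℝ) : HasDerivAt (fun t => Real.exp (C * t)) (Real.exp (C * y) * C) y := by
    simpa using ((hasDerivAt_id y).const_mul C).exp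
  have hmul := fun y (hy : y ∈ Icc a b) => (hexp y).hasDerivWithinAt.fun_mul (hderiv y hy)
  have hmono : MonotoneOn (fun t => Real.exp (C * t) * f t) (Icc a b) := by
    refine monotoneOn_of_hasDerivWithinAt_nonneg (convex_Icc a b)
      (fun y hy => (hmul y hy).continuousWithinAt)
      (fun y hy => (hmul y (interior_subset hy)).mono interior_subset) fun y hy => ?_
    have := mul_le_mul_of_nonneg_left (hbound y (interior_subset hy)) (Real.exp_pos (C * y)).le
    linarith
  have hle := hmono (left_mem_Icc.2 (hx.1.trans hx.2)) hx hx.1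
  exact pos_of_mul_pos_right ((mul_pos (Real.exp_pos _) ha).trans_le hle) (Real.exp_pos _).le

theorem eq_left_of_hasDerivWithinAt_zero
    (hderiv : ∀ x ∈ Icc a b, HasDerivWithinAt f 0 (Icc a b) x) : ∀ x ∈ Icc a b, f x = f a :=
  constant_of_has_deriv_right_zero (fun x hx => (hderiv x hx).continuousWithinAt)
    fun x hx =>
      (hderiv x (Ico_subset_Icc_self hx)).mono_of_mem_nhdsWithin (Icc_mem_nhdsGE_of_mem hx)

end Calculus

/-- The Hamiltonian form `u' = v / p`, `v' = q u - F` of `-(p u')' + q u = F` on `s`, in which the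
flux `v` stands for `p u'`. -/
structure IsSturmLiouvilleSystemOn (p q F : ℝ → ℝ) (s : Set ℝ) (u v : ℝ → ℝ) : Prop where
  hasDerivWithinAt : ∀ x ∈ s, HasDerivWithinAt u (v x / p x) s x
  hasDerivWithinAt_flux : ∀ x ∈ s, HasDerivWithinAt v (q x * u x - F x) s x

namespace IsSturmLiouvilleSystemOn

variable {p q F u v w z : ℝ → ℝ} {s : Set ℝ} {a b x : ℝ}

theorem continuousOn (hu : IsSturmLiouvilleSystemOn p q F s u v) : ContinuousOn u s :=
  fun x hx => (hu.hasDerivWithinAt x hx).continuousWithinAt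

theorem continuousOn_flux (hu : IsSturmLiouvilleSystemOn p q F s u v) : ContinuousOn v s :=
  fun x hx => (hu.hasDerivWithinAt_flux x hx).continuousWithinAt

theorem hasDerivWithinAt_wronskian (hw : IsSturmLiouvilleSystemOn p q 0 s w z)
    (hu : IsSturmLiouvilleSystemOn p q F s u v) (hx : x ∈ s) :
    HasDerivWithinAt (fun t => w t * v t - z t * u t) (-(F x * w x)) s x := by
  refine (((hw.hasDerivWithinAt x hx).fun_mul (hu.hasDerivWithinAt_flux x hx)).fun_sub
    ((hw.hasDerivWithinAt_flux x hx).fun_mul (hu.hasDerivWithinAt x hx))).congr_deriv ?_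
  simp only [Pi.zero_apply]
  ring

theorem hasDerivWithinAt_sq_add_sq (hw : IsSturmLiouvilleSystemOn p q 0 s w z) (hx : x ∈ s) :
    HasDerivWithinAt (fun t => w t ^ 2 + z t ^ 2) (2 * ((p x)⁻¹ + q x) * (w x * z x)) s x := by
  refine (((hw.hasDerivWithinAt x hx).fun_pow 2).fun_add
    ((hw.hasDerivWithinAt_flux x hx).fun_pow 2)).congr_deriv ?_
  simp only [Pi.zero_apply]
  ring

theorem sq_add_sq_pos (hp : ContinuousOn p (Icc a b)) (hp0 : ∀ x ∈ Icc a b, p x ≠ 0)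
    (hq : ContinuousOn q (Icc a b)) (hw : IsSturmLiouvilleSystemOn p q 0 (Icc a b) w z)
    (ha : 0 < w a ^ 2 + z a ^ 2) : ∀ x ∈ Icc a b, 0 < w x ^ 2 + z x ^ 2 := by
  obtain ⟨C, hC⟩ := isCompact_Icc.exists_bound_of_continuousOn ((hp.inv₀ hp0).add hq)
  refine pos_of_neg_mul_le_deriv (C := C) (fun x hx => hw.hasDerivWithinAt_sq_add_sq hx)
    (fun x hx => ?_) ha
  have hwz : |2 * (w x * z x)| ≤ w x ^ 2 + z x ^ 2 :=
    abs_le.2 ⟨by linarith [sq_nonneg (w x + z x)], by linarith [sq_nonneg (w x - z x)]⟩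
  have hprod := mul_le_mul (hC x hx) hwz (abs_nonneg _) ((norm_nonneg _).trans (hC x hx))
  rw [Real.norm_eq_abs, ← abs_mul] at hprod
  have hlower := (abs_le.1 hprod).1
  simp only [Pi.add_apply, Pi.inv_apply] at hlower
  linarith

-- The function differentiated here is the coordinate of `(u, v)` along `(w, z)` in the orthogonal
-- frame `(w, z)`, `(-z, w)`.
theorem hasDerivWithinAt_frameCoord (hw : IsSturmLiouvilleSystemOn p q 0 s w z)
    (hu : IsSturmLiouvilleSystemOn p q F s u v) (hx : x ∈ s) (hpos : 0 < w x ^ 2 + z x ^ 2) :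
    HasDerivWithinAt (fun t => (w t * u t + z t * v t) / (w t ^ 2 + z t ^ 2))
      (((p x)⁻¹ + q x) * (w x ^ 2 - z x ^ 2) * (w x * v x - z x * u x) / (w x ^ 2 + z x ^ 2) ^ 2
        - F x * z x / (w x ^ 2 + z x ^ 2)) s x := by
  have hnum := ((hw.hasDerivWithinAt x hx).fun_mul (hu.hasDerivWithinAt x hx)).fun_add
    ((hw.hasDerivWithinAt_flux x hx).fun_mul (hu.hasDerivWithinAt_flux x hx))
  refine (hnum.fun_div (hw.hasDerivWithinAt_sq_add_sq hx) hpos.ne').congr_deriv ?_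
  simp only [Pi.zero_apply]
  field_simp
  ring

theorem exists_eqOn_const_mul (hw : IsSturmLiouvilleSystemOn p q 0 (Icc a b) w z)
    (hu : IsSturmLiouvilleSystemOn p q 0 (Icc a b) u v)
    (hpos : ∀ x ∈ Icc a b, 0 < w x ^ 2 + z x ^ 2) (hW : w b * v b - z b * u b = 0) :
    ∃ c, EqOn u (fun x => c * w x) (Icc a b) := by
  have hWconst : ∀ x ∈ Icc a b, w x * v x - z x * u x = w a * v a - z a * u a :=
    eq_left_of_hasDerivWithinAt_zero fun x hx => by
      simpa using hw.hasDerivWithinAt_wronskian hu hx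
  have hW0 : ∀ x ∈ Icc a b, w x * v x - z x * u x = 0 := fun x hx =>
    (hWconst x hx).trans ((hWconst b (right_mem_Icc.2 (hx.1.trans hx.2))).symm.trans hW)
  have hcoord := eq_left_of_hasDerivWithinAt_zero fun x hx => by
    simpa [hW0 x hx] using hw.hasDerivWithinAt_frameCoord hu hx (hpos x hx)
  refine ⟨(w a * u a + z a * v a) / (w a ^ 2 + z a ^ 2), fun x hx => ?_⟩
  have hx0 := (hpos x hx).ne'
  have hx1 := hW0 x hx
  simp only [← hcoord x hx]
  field_simp
  linear_combination (-z x) * hx1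

theorem exists_of_sq_add_sq_pos (hab : a ≤ b) (hp : ContinuousOn p (Icc a b))
    (hp0 : ∀ x ∈ Icc a b, p x ≠ 0) (hq : ContinuousOn q (Icc a b)) (hF : ContinuousOn F (Icc a b))
    (hw : IsSturmLiouvilleSystemOn p q 0 (Icc a b) w z)
    (hpos : ∀ x ∈ Icc a b, 0 < w x ^ 2 + z x ^ 2) :
    ∃ u v, IsSturmLiouvilleSystemOn p q F (Icc a b) u v ∧ u b = 0 ∧ v b = 0 := by
  have hwc := hw.continuousOn
  have hzc := hw.continuousOn_flux
  -- `W` becomes the Wronskian `w v - z u`, and `A` the coordinate of `(u, v)` along `(w, z)`.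
  obtain ⟨W, hWb, hW⟩ := exists_primitive_eq_zero_of_continuousOn_Icc hab (hF.mul hwc).neg b
  have hWc : ContinuousOn W (Icc a b) := fun x hx => (hW x hx).continuousWithinAt
  have hne : ∀ x ∈ Icc a b, w x ^ 2 + z x ^ 2 ≠ 0 := fun x hx => (hpos x hx).ne'
  have hAc : ContinuousOn (fun x => ((p x)⁻¹ + q x) * (w x ^ 2 - z x ^ 2) * W x
      / (w x ^ 2 + z x ^ 2) ^ 2 - F x * z x / (w x ^ 2 + z x ^ 2)) (Icc a b) := by
    fun_prop (disch := simp_all)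
  obtain ⟨A, hAb, hA⟩ := exists_primitive_eq_zero_of_continuousOn_Icc hab hAc b
  have hB := fun x hx => (hW x hx).fun_div (hw.hasDerivWithinAt_sq_add_sq hx) (hne x hx)
  refine ⟨fun x => A x * w x - W x / (w x ^ 2 + z x ^ 2) * z x,
    fun x => A x * z x + W x / (w x ^ 2 + z x ^ 2) * w x, ⟨fun x hx => ?_, fun x hx => ?_⟩,
    by simp [hAb, hWb], by simp [hAb, hWb]⟩
  · refine (((hA x hx).fun_mul (hw.hasDerivWithinAt x hx)).fun_sub
      ((hB x hx).fun_mul (hw.hasDerivWithinAt_flux x hx))).congr_deriv ?_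
    simp only [Pi.zero_apply, Pi.mul_apply, Pi.neg_apply]
    have hx0 := hne x hx
    field_simp
    ring
  · refine (((hA x hx).fun_mul (hw.hasDerivWithinAt_flux x hx)).fun_add
      ((hB x hx).fun_mul (hw.hasDerivWithinAt x hx))).congr_deriv ?_
    simp only [Pi.zero_apply, Pi.mul_apply, Pi.neg_apply]
    have hx0 := hne x hx
    field_simp
    ring

end IsSturmLiouvilleSystemOn

/-- `u` is a classical solution of `-(p u')' + q u = F` on `s`. Being a restriction of a `C²`
function on `ℝ`, it has two-sided derivatives at the boundary points of `s` too. -/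
structure IsSturmLiouvilleSolutionOn_s8 (p q F : ℝ → ℝ) (s : Set ℝ) (u : ℝ → ℝ) : Prop where
  contDiff : ContDiff ℝ 2 u
  ode : ∀ x ∈ s, -deriv (fun t => p t * deriv u t) x + q x * u x = F x

theorem differentiable_mul_deriv {p u : ℝ → ℝ} (hp : ContDiff ℝ 1 p) (hu : ContDiff ℝ 2 u) :
    Differentiable ℝ fun t => p t * deriv u t :=
  (hp.differentiable one_ne_zero).fun_mul hu.differentiable_deriv_two

namespace IsSturmLiouvilleSolutionOn_s8

variable {p q F G u v : ℝ → ℝ} {s : Set ℝ}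

theorem isSturmLiouvilleSystemOn (hp : ContDiff ℝ 1 p) (hp0 : ∀ x ∈ s, p x ≠ 0)
    (hu : IsSturmLiouvilleSolutionOn_s8 p q F s u) :
    IsSturmLiouvilleSystemOn p q F s u fun t => p t * deriv u t where
  hasDerivWithinAt x hx := by
    rw [mul_div_cancel_left₀ _ (hp0 x hx)]
    exact (hu.contDiff.differentiable two_ne_zero x).hasDerivAt.hasDerivWithinAt
  hasDerivWithinAt_flux x hx := by
    refine (differentiable_mul_deriv hp hu.contDiff x).hasDerivAt.hasDerivWithinAt.congr_deriv ?_
    linear_combination -hu.ode x hx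

theorem sub_const_mul (hp : ContDiff ℝ 1 p) (hu : IsSturmLiouvilleSolutionOn_s8 p q F s u)
    (hv : IsSturmLiouvilleSolutionOn_s8 p q G s v) (c : ℝ) :
    IsSturmLiouvilleSolutionOn_s8 p q (fun x => F x - c * G x) s fun x => u x - c * v x where
  contDiff := hu.contDiff.sub (contDiff_const.mul hv.contDiff)
  ode x hx := by
    have hflux : (fun t => p t * deriv (fun x => u x - c * v x) t)
        = fun t => p t * deriv u t - c * (p t * deriv v t) := by
      funext t
      have hu' := (hu.contDiff.differentiable two_ne_zero t).hasDerivAt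
      have hv' := (hv.contDiff.differentiable two_ne_zero t).hasDerivAt
      rw [(hu'.fun_sub (hv'.const_mul c)).deriv]
      ring
    have hderiv := (differentiable_mul_deriv hp hu.contDiff x).hasDerivAt.fun_sub
      ((differentiable_mul_deriv hp hv.contDiff x).hasDerivAt.const_mul c)
    rw [hflux, hderiv.deriv]
    linear_combination hu.ode x hx - c * hv.ode x hx

end IsSturmLiouvilleSolutionOn_s8

theorem IsSturmLiouvilleSystemOn.exists_isSturmLiouvilleSolutionOn_eqOn {p q F u v : ℝ → ℝ}
    {a b : ℝ} (hab : a < b) (hp : ContDiff ℝ 1 p) (hp0 : ∀ x ∈ Icc a b, p x ≠ 0)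
    (hq : ContinuousOn q (Icc a b)) (hF : ContinuousOn F (Icc a b))
    (hu : IsSturmLiouvilleSystemOn p q F (Icc a b) u v) :
    ∃ U, IsSturmLiouvilleSolutionOn_s8 p q F (Icc a b) U ∧ EqOn U u (Icc a b) := by
  have huniq := uniqueDiffOn_Icc hab
  have hv1 : ContDiffOn ℝ 1 v (Icc a b) := by
    refine contDiffOn_one_iff_derivWithin huniq |>.2
      ⟨fun x hx => (hu.hasDerivWithinAt_flux x hx).differentiableWithinAt, ?_⟩
    exact ((hq.mul hu.continuousOn).sub hF).congr fun x hx =>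
      (hu.hasDerivWithinAt_flux x hx).derivWithin (huniq x hx)
  have hu2 : ContDiffOn ℝ 2 u (Icc a b) := by
    refine (contDiffOn_succ_iff_derivWithin (n := 1) huniq).2
      ⟨fun x hx => (hu.hasDerivWithinAt x hx).differentiableWithinAt, by simp, ?_⟩
    exact (hv1.div hp.contDiffOn hp0).congr fun x hx =>
      (hu.hasDerivWithinAt x hx).derivWithin (huniq x hx)
  obtain ⟨U, hU, heq⟩ := exists_contDiff_eqOn_Icc_of_contDiffOn hab 2 hu2
  have hflux : EqOn (fun t => p t * deriv U t) v (Icc a b) := fun x hx => by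
    have hderiv := (hu.hasDerivWithinAt x hx).congr heq (heq hx)
    have hUx := (hU.differentiable two_ne_zero x).hasDerivAt.hasDerivWithinAt (s := Icc a b)
    simp only [(huniq x hx).eq_deriv _ hUx hderiv, mul_div_cancel₀ _ (hp0 x hx)]
  refine ⟨U, ⟨hU, fun x hx => ?_⟩, heq⟩
  have hderiv := (hu.hasDerivWithinAt_flux x hx).congr hflux (hflux hx)
  have hpU := (differentiable_mul_deriv hp hU x).hasDerivAt.hasDerivWithinAt (s := Icc a b)
  rw [(huniq x hx).eq_deriv _ hpU hderiv, heq hx]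
  ring

namespace IsSturmLiouvilleSolutionOn_s8

variable {p q F u w : ℝ → ℝ} {a b : ℝ}

theorem integral_source_mul_eq (hab : a ≤ b) (hp : ContDiff ℝ 1 p)
    (hp0 : ∀ x ∈ Icc a b, p x ≠ 0) (hF : ContinuousOn F (Icc a b))
    (hw : IsSturmLiouvilleSolutionOn_s8 p q 0 (Icc a b) w)
    (hu : IsSturmLiouvilleSolutionOn_s8 p q F (Icc a b) u) (hwb : w b = 0) (hub : u b = 0) :
    ∫ x in a..b, F x * w x = p a * deriv u a * w a - p a * deriv w a * u a := by
  have hwronskian := fun x (hx : x ∈ Icc a b) =>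
    (hw.isSturmLiouvilleSystemOn hp hp0).hasDerivWithinAt_wronskian
      (hu.isSturmLiouvilleSystemOn hp hp0) hx
  have hint : IntervalIntegrable (fun x => -(F x * w x)) MeasureTheory.volume a b :=
    ((hF.mul hw.contDiff.continuous.continuousOn).neg).intervalIntegrable_of_Icc hab
  have hftc := intervalIntegral.integral_eq_sub_of_hasDerivAt_of_le hab
    (fun x hx => (hwronskian x hx).continuousWithinAt)
    (fun x hx => (hwronskian x (Ioo_subset_Icc_self hx)).hasDerivAt (Icc_mem_nhds hx.1 hx.2)) hint
  rw [intervalIntegral.integral_neg, hwb, hub] at hftc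
  linear_combination -hftc

theorem sq_add_sq_pos (hp : ContDiff ℝ 1 p) (hp0 : ∀ x ∈ Icc a b, p x ≠ 0)
    (hq : ContinuousOn q (Icc a b)) (hw : IsSturmLiouvilleSolutionOn_s8 p q 0 (Icc a b) w)
    (hwa : w a ≠ 0) : ∀ x ∈ Icc a b, 0 < w x ^ 2 + (p x * deriv w x) ^ 2 :=
  (hw.isSturmLiouvilleSystemOn hp hp0).sq_add_sq_pos hp.continuous.continuousOn hp0 hq
    (by positivity)

theorem exists_eqOn_const_mul (hp : ContDiff ℝ 1 p) (hp0 : ∀ x ∈ Icc a b, p x ≠ 0)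
    (hq : ContinuousOn q (Icc a b)) (hw : IsSturmLiouvilleSolutionOn_s8 p q 0 (Icc a b) w)
    (hu : IsSturmLiouvilleSolutionOn_s8 p q 0 (Icc a b) u) (hwa : w a ≠ 0) (hwb : w b = 0)
    (hub : u b = 0) : ∃ c, EqOn u (fun x => c * w x) (Icc a b) :=
  (hw.isSturmLiouvilleSystemOn hp hp0).exists_eqOn_const_mul (hu.isSturmLiouvilleSystemOn hp hp0)
    (hw.sq_add_sq_pos hp hp0 hq hwa) (by simp [hwb, hub])

theorem exists_eq_zero_right (hab : a < b) (hp : ContDiff ℝ 1 p) (hp0 : ∀ x ∈ Icc a b, p x ≠ 0)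
    (hq : ContinuousOn q (Icc a b)) (hF : ContinuousOn F (Icc a b))
    (hw : IsSturmLiouvilleSolutionOn_s8 p q 0 (Icc a b) w) (hwa : w a ≠ 0) :
    ∃ u, IsSturmLiouvilleSolutionOn_s8 p q F (Icc a b) u ∧ u b = 0 := by
  obtain ⟨y, v, hsys, hyb, -⟩ := (hw.isSturmLiouvilleSystemOn hp hp0).exists_of_sq_add_sq_pos hab.le
    hp.continuous.continuousOn hp0 hq hF (hw.sq_add_sq_pos hp hp0 hq hwa)
  obtain ⟨u, hu, heq⟩ := hsys.exists_isSturmLiouvilleSolutionOn_eqOn hab hp hp0 hq hF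
  exact ⟨u, hu, (heq (right_mem_Icc.2 hab.le)).trans hyb⟩

end IsSturmLiouvilleSolutionOn_s8

/-- `u` solves `-(pᵢ uᵢ')' + qᵢ uᵢ = Fᵢ` on the edges `[0, ℓᵢ]` of a star graph, whose vertex sits
at `0` on each edge, with Dirichlet conditions at the outer ends, continuity at the vertex and
total outgoing flux `D` there. -/
structure IsStarSolution {ι : Type*} [Fintype ι] (ℓ : ι → ℝ) (p q F : ι → ℝ → ℝ) (D : ℝ)
    (u : ι → ℝ → ℝ) : Prop where
  edge : ∀ i, IsSturmLiouvilleSolutionOn_s8 (p i) (q i) (F i) (Icc 0 (ℓ i)) (u i)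
  dirichlet : ∀ i, u i (ℓ i) = 0
  vertex : ∀ i j, u i 0 = u j 0
  kirchhoff : ∑ i, p i 0 * deriv (u i) 0 = D

/-- The weighted `L²` inner product `∑ᵢ ∫ rᵢ uᵢ wᵢ` on the star graph. -/
noncomputable def starInner {ι : Type*} [Fintype ι] (ℓ : ι → ℝ) (r u w : ι → ℝ → ℝ) : ℝ :=
  ∑ i, ∫ x in (0 : ℝ)..ℓ i, r i x * u i x * w i x

section StarGraph

variable {ι : Type*} [Fintype ι] {ℓ : ι → ℝ} {p q r F G u v w : ι → ℝ → ℝ} {D E : ℝ}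

theorem starInner_sub_const_mul_left (hℓ : ∀ i, 0 ≤ ℓ i)
    (hr : ∀ i, ContinuousOn (r i) (Icc 0 (ℓ i))) (hu : ∀ i, ContinuousOn (u i) (Icc 0 (ℓ i)))
    (hv : ∀ i, ContinuousOn (v i) (Icc 0 (ℓ i))) (hw : ∀ i, ContinuousOn (w i) (Icc 0 (ℓ i)))
    (c : ℝ) :
    starInner ℓ r (fun i x => u i x - c * v i x) w = starInner ℓ r u w - c * starInner ℓ r v w := by
  simp only [starInner, Finset.mul_sum, ← Finset.sum_sub_distrib]
  refine Finset.sum_congr rfl fun i _ => ?_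
  rw [← intervalIntegral.integral_const_mul, ← intervalIntegral.integral_sub]
  · exact intervalIntegral.integral_congr fun x _ => by ring
  · exact (((hr i).mul (hu i)).mul (hw i)).intervalIntegrable_of_Icc (hℓ i)
  · exact (continuousOn_const.mul (((hr i).mul (hv i)).mul (hw i))).intervalIntegrable_of_Icc (hℓ i)

theorem starInner_congr_left (hℓ : ∀ i, 0 ≤ ℓ i) (huv : ∀ i, EqOn (u i) (v i) (Icc 0 (ℓ i))) :
    starInner ℓ r u w = starInner ℓ r v w := by
  refine Finset.sum_congr rfl fun i _ => intervalIntegral.integral_congr fun x hx => ?_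
  rw [uIcc_of_le (hℓ i)] at hx
  simp only [huv i hx]

theorem starInner_self_pos [Nonempty ι] (hℓ : ∀ i, 0 < ℓ i)
    (hr : ∀ i, ContinuousOn (r i) (Icc 0 (ℓ i))) (hrpos : ∀ i, ∀ x ∈ Icc 0 (ℓ i), 0 < r i x)
    (hw : ∀ i, ContinuousOn (w i) (Icc 0 (ℓ i))) (hw0 : ∀ i, w i 0 ≠ 0) :
    0 < starInner ℓ r w w := by
  refine Finset.sum_pos (fun i _ => ?_) Finset.univ_nonempty
  simp only [mul_assoc]
  have h0 : (0 : ℝ) ∈ Icc 0 (ℓ i) := left_mem_Icc.2 (hℓ i).le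
  refine intervalIntegral.integral_pos (hℓ i) ((hr i).mul ((hw i).mul (hw i)))
    (fun x hx => ?_) ⟨0, h0, mul_pos (hrpos i 0 h0) (mul_self_pos.2 (hw0 i))⟩
  exact mul_nonneg (hrpos i x (Ioc_subset_Icc_self hx)).le (mul_self_nonneg _)

namespace IsStarSolution

theorem continuousOn (hu : IsStarSolution ℓ p q F D u) (i : ι) : ContinuousOn (u i) (Icc 0 (ℓ i)) :=
  (hu.edge i).contDiff.continuous.continuousOn

theorem sub_const_mul (hp : ∀ i, ContDiff ℝ 1 (p i)) (hu : IsStarSolution ℓ p q F D u)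
    (hv : IsStarSolution ℓ p q G E v) (c : ℝ) :
    IsStarSolution ℓ p q (fun i x => F i x - c * G i x) (D - c * E)
      fun i x => u i x - c * v i x where
  edge i := (hu.edge i).sub_const_mul (hp i) (hv.edge i) c
  dirichlet i := by rw [hu.dirichlet, hv.dirichlet, mul_zero, sub_zero]
  vertex i j := by rw [hu.vertex i j, hv.vertex i j]
  kirchhoff := by
    rw [← hu.kirchhoff, ← hv.kirchhoff, Finset.mul_sum, ← Finset.sum_sub_distrib]
    refine Finset.sum_congr rfl fun i _ => ?_
    have hu' := ((hu.edge i).contDiff.differentiable two_ne_zero 0).hasDerivAt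
    have hv' := ((hv.edge i).contDiff.differentiable two_ne_zero 0).hasDerivAt
    rw [(hu'.fun_sub (hv'.const_mul c)).deriv]
    ring

theorem sum_integral_mul_eq (hℓ : ∀ i, 0 ≤ ℓ i) (hp : ∀ i, ContDiff ℝ 1 (p i))
    (hp0 : ∀ i, ∀ x ∈ Icc 0 (ℓ i), p i x ≠ 0) (hF : ∀ i, ContinuousOn (F i) (Icc 0 (ℓ i)))
    (hw : IsStarSolution ℓ p q 0 0 w) (hu : IsStarSolution ℓ p q F D u) (i₀ : ι) :
    ∑ i, ∫ x in (0 : ℝ)..ℓ i, F i x * w i x = D * w i₀ 0 := by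
  calc ∑ i, ∫ x in (0 : ℝ)..ℓ i, F i x * w i x
    _ = ∑ i, (p i 0 * deriv (u i) 0 * w i₀ 0 - p i 0 * deriv (w i) 0 * u i₀ 0) := by
        refine Finset.sum_congr rfl fun i _ => ?_
        rw [hw.vertex i₀ i, hu.vertex i₀ i]
        exact (hw.edge i).integral_source_mul_eq (hℓ i) (hp i) (hp0 i) (hF i) (hu.edge i)
          (hw.dirichlet i) (hu.dirichlet i)
    _ = D * w i₀ 0 := by
        rw [Finset.sum_sub_distrib, ← Finset.sum_mul, ← Finset.sum_mul, hu.kirchhoff, hw.kirchhoff]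
        ring

theorem exists_eqOn_const_mul (hℓ : ∀ i, 0 ≤ ℓ i) (hp : ∀ i, ContDiff ℝ 1 (p i))
    (hp0 : ∀ i, ∀ x ∈ Icc 0 (ℓ i), p i x ≠ 0) (hq : ∀ i, ContinuousOn (q i) (Icc 0 (ℓ i)))
    (hw : IsStarSolution ℓ p q 0 0 w) (hu : IsStarSolution ℓ p q 0 D u) {i₀ : ι}
    (hw0 : w i₀ 0 ≠ 0) : ∃ c, ∀ i, EqOn (u i) (fun x => c * w i x) (Icc 0 (ℓ i)) := by
  refine ⟨u i₀ 0 / w i₀ 0, fun i => ?_⟩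
  obtain ⟨c, hc⟩ := (hw.edge i).exists_eqOn_const_mul (hp i) (hp0 i) (hq i) (hu.edge i)
    (by rwa [hw.vertex i i₀]) (hw.dirichlet i) (hu.dirichlet i)
  have hc0 : u i₀ 0 = c * w i₀ 0 := by
    rw [hu.vertex i₀ i, hw.vertex i₀ i]
    exact hc (left_mem_Icc.2 (hℓ i))
  rwa [hc0, mul_div_cancel_right₀ _ hw0]

theorem exists_iff_sum_integral_mul_eq (hℓ : ∀ i, 0 < ℓ i) (hp : ∀ i, ContDiff ℝ 1 (p i))
    (hp0 : ∀ i, ∀ x ∈ Icc 0 (ℓ i), p i x ≠ 0) (hq : ∀ i, ContinuousOn (q i) (Icc 0 (ℓ i)))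
    (hF : ∀ i, ContinuousOn (F i) (Icc 0 (ℓ i))) (hw : IsStarSolution ℓ p q 0 0 w) {i₀ : ι}
    (hw0 : w i₀ 0 ≠ 0) :
    (∃ u, IsStarSolution ℓ p q F D u) ↔ ∑ i, ∫ x in (0 : ℝ)..ℓ i, F i x * w i x = D * w i₀ 0 := by
  refine ⟨fun ⟨u, hu⟩ => hw.sum_integral_mul_eq (fun i => (hℓ i).le) hp hp0 hF hu i₀, fun hD => ?_⟩
  have hwi : ∀ i, w i 0 ≠ 0 := fun i => by rwa [hw.vertex i i₀]
  choose y hy hyℓ using fun i =>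
    (hw.edge i).exists_eq_zero_right (hℓ i) (hp i) (hp0 i) (hq i) (hF i) (hwi i)
  -- Subtracting a multiple of `w i` makes every edge solution vanish at the vertex.
  let u : ι → ℝ → ℝ := fun i x => y i x - y i 0 / w i 0 * w i x
  have hu : IsStarSolution ℓ p q F (∑ i, p i 0 * deriv (u i) 0) u :=
    { edge := fun i => by
        simpa using (hy i).sub_const_mul (hp i) (hw.edge i) (y i 0 / w i 0)
      dirichlet := fun i => by simp [u, hyℓ, hw.dirichlet]
      vertex := fun i j => by simp [u, hwi]
      kirchhoff := rfl }
  have hflux := hw.sum_integral_mul_eq (fun i => (hℓ i).le) hp hp0 hF hu i₀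
  rw [mul_right_cancel₀ hw0 (hflux.symm.trans hD)] at hu
  exact ⟨u, hu⟩

end IsStarSolution

theorem sum_integral_add_mul_eq (hℓ : ∀ i, 0 ≤ ℓ i)
    (hr : ∀ i, ContinuousOn (r i) (Icc 0 (ℓ i))) (hF : ∀ i, ContinuousOn (F i) (Icc 0 (ℓ i)))
    (hw : ∀ i, ContinuousOn (w i) (Icc 0 (ℓ i))) (ν : ℝ) :
    ∑ i, ∫ x in (0 : ℝ)..ℓ i, (F i x + ν * r i x * w i x) * w i x
      = ∑ i, (∫ x in (0 : ℝ)..ℓ i, F i x * w i x) + ν * starInner ℓ r w w := by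
  simp only [starInner, Finset.mul_sum, ← Finset.sum_add_distrib]
  refine Finset.sum_congr rfl fun i _ => ?_
  rw [← intervalIntegral.integral_const_mul, ← intervalIntegral.integral_add]
  · exact intervalIntegral.integral_congr fun x _ => by ring
  · exact ((hF i).mul (hw i)).intervalIntegrable_of_Icc (hℓ i)
  · exact (continuousOn_const.mul (((hr i).mul (hw i)).mul (hw i))).intervalIntegrable_of_Icc (hℓ i)

namespace IsStarSolution

theorem exists_iff_multiplier_mul_starInner_eq (hℓ : ∀ i, 0 < ℓ i) (hp : ∀ i, ContDiff ℝ 1 (p i))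
    (hp0 : ∀ i, ∀ x ∈ Icc 0 (ℓ i), p i x ≠ 0) (hq : ∀ i, ContinuousOn (q i) (Icc 0 (ℓ i)))
    (hr : ∀ i, ContinuousOn (r i) (Icc 0 (ℓ i))) (hF : ∀ i, ContinuousOn (F i) (Icc 0 (ℓ i)))
    (hw : IsStarSolution ℓ p q 0 0 w) {i₀ : ι} (hw0 : w i₀ 0 ≠ 0) {ν : ℝ} :
    (∃ u, IsStarSolution ℓ p q (fun i x => F i x + ν * r i x * w i x) D u) ↔
      ν * starInner ℓ r w w = D * w i₀ 0 - ∑ i, ∫ x in (0 : ℝ)..ℓ i, F i x * w i x := by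
  have hsource : ∀ i, ContinuousOn (fun x => F i x + ν * r i x * w i x) (Icc 0 (ℓ i)) := fun i =>
    (hF i).add ((continuousOn_const.mul (hr i)).mul (hw.continuousOn i))
  rw [hw.exists_iff_sum_integral_mul_eq hℓ hp hp0 hq hsource hw0,
    sum_integral_add_mul_eq (fun i => (hℓ i).le) hr hF hw.continuousOn, eq_sub_iff_add_eq']

theorem exists_starInner_eq_zero (hℓ : ∀ i, 0 ≤ ℓ i) (hp : ∀ i, ContDiff ℝ 1 (p i))
    (hr : ∀ i, ContinuousOn (r i) (Icc 0 (ℓ i))) (hw : IsStarSolution ℓ p q 0 0 w)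
    (hww : starInner ℓ r w w ≠ 0) (hu : IsStarSolution ℓ p q F D u) :
    ∃ φ, IsStarSolution ℓ p q F D φ ∧ starInner ℓ r φ w = 0 := by
  let c := starInner ℓ r u w / starInner ℓ r w w
  refine ⟨fun i x => u i x - c * w i x, by simpa using hu.sub_const_mul hp hw c, ?_⟩
  rw [starInner_sub_const_mul_left hℓ hr hu.continuousOn hw.continuousOn hw.continuousOn,
    div_mul_cancel₀ _ hww, sub_self]

theorem eqOn_of_starInner_eq (hℓ : ∀ i, 0 ≤ ℓ i) (hp : ∀ i, ContDiff ℝ 1 (p i))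
    (hp0 : ∀ i, ∀ x ∈ Icc 0 (ℓ i), p i x ≠ 0) (hq : ∀ i, ContinuousOn (q i) (Icc 0 (ℓ i)))
    (hr : ∀ i, ContinuousOn (r i) (Icc 0 (ℓ i))) (hw : IsStarSolution ℓ p q 0 0 w) {i₀ : ι}
    (hw0 : w i₀ 0 ≠ 0) (hww : starInner ℓ r w w ≠ 0) (hu : IsStarSolution ℓ p q F D u)
    (hv : IsStarSolution ℓ p q F E v) (huv : starInner ℓ r u w = starInner ℓ r v w) (i : ι) :
    EqOn (u i) (v i) (Icc 0 (ℓ i)) := by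
  have hdiff : IsStarSolution ℓ p q 0 (D - 1 * E) fun i x => u i x - 1 * v i x := by
    convert hu.sub_const_mul hp hv 1 using 1
    ext i x
    simp
  obtain ⟨c, hc⟩ := hw.exists_eqOn_const_mul hℓ hp hp0 hq hdiff hw0
  have hv_eq : ∀ j, EqOn (v j) (fun x => u j x - c * w j x) (Icc 0 (ℓ j)) := fun j x hx => by
    linear_combination -hc j hx
  have hc0 : c * starInner ℓ r w w = 0 := by
    have hsub := starInner_sub_const_mul_left hℓ hr hu.continuousOn hw.continuousOn
      hw.continuousOn c
    rw [← starInner_congr_left hℓ hv_eq, huv] at hsub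
    linarith
  intro x hx
  simp only [hv_eq i hx, (mul_eq_zero.1 hc0).resolve_right hww, zero_mul, sub_zero]

end IsStarSolution

theorem limit_fredholm_exists_unique_general (hℓ : ∀ i, 0 < ℓ i) (hp : ∀ i, ContDiff ℝ 1 (p i))
    (hp0 : ∀ i, ∀ x ∈ Icc 0 (ℓ i), p i x ≠ 0) (hq : ∀ i, ContinuousOn (q i) (Icc 0 (ℓ i)))
    (hr : ∀ i, ContinuousOn (r i) (Icc 0 (ℓ i))) (hrpos : ∀ i, ∀ x ∈ Icc 0 (ℓ i), 0 < r i x)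
    (hF : ∀ i, ContinuousOn (F i) (Icc 0 (ℓ i))) (hw : IsStarSolution ℓ p q 0 0 w) {i₀ : ι}
    (hw0 : w i₀ 0 ≠ 0) :
    ∃ (ν : ℝ) (φ : ι → ℝ → ℝ),
      (IsStarSolution ℓ p q (fun i x => F i x + ν * r i x * w i x) D φ ∧ starInner ℓ r φ w = 0) ∧
        ∀ (ν' : ℝ) (φ' : ι → ℝ → ℝ),
          IsStarSolution ℓ p q (fun i x => F i x + ν' * r i x * w i x) D φ' ∧
            starInner ℓ r φ' w = 0 →
          ν' = ν ∧ ∀ i, EqOn (φ' i) (φ i) (Icc 0 (ℓ i)) := by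
  have hℓ' : ∀ i, 0 ≤ ℓ i := fun i => (hℓ i).le
  have hww : starInner ℓ r w w ≠ 0 :=
    have : Nonempty ι := ⟨i₀⟩
    (starInner_self_pos hℓ hr hrpos hw.continuousOn fun i => by rwa [hw.vertex i i₀]).ne'
  have hsolvable (ν : ℝ) := hw.exists_iff_multiplier_mul_starInner_eq (D := D) (ν := ν)
    hℓ hp hp0 hq hr hF hw0
  obtain ⟨u, hu⟩ := (hsolvable _).2 (div_mul_cancel₀ _ hww)
  obtain ⟨φ, hφ, hφw⟩ := hw.exists_starInner_eq_zero hℓ' hp hr hww hu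
  refine ⟨_, φ, ⟨hφ, hφw⟩, fun ν' φ' ⟨hφ', hφw'⟩ => ?_⟩
  obtain rfl := eq_div_of_mul_eq hww ((hsolvable ν').1 ⟨φ', hφ'⟩)
  exact ⟨rfl, hw.eqOn_of_starInner_eq hℓ' hp hp0 hq hr hw0 hww hφ' hφ (hφw'.trans hφw.symm)⟩

end StarGraph

theorem forall_fin_three_eq_iff {α : Type*} {f : Fin 3 → α} :
    (∀ i j, f i = f j) ↔ f 0 = f 1 ∧ f 1 = f 2 := by
  refine ⟨fun h => ⟨h 0 1, h 1 2⟩, fun ⟨h₀₁, h₁₂⟩ i j => ?_⟩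
  fin_cases i <;> fin_cases j <;> simp [h₀₁, h₁₂]

section LimitProblem

variable {ℓ : Fin 3 → ℝ} {h w Φ φ : Fin 3 → ℝ → ℝ} {μ D ν : ℝ}

theorem IsLimitEigenpair.isStarSolution (hw : IsLimitEigenpair ℓ h μ w) :
    IsStarSolution ℓ (fun i x => h i x ^ 2) (fun i x => -μ * h i x ^ 2) 0 0 w := by
  obtain ⟨hcont, -, hode, hdir, hvertex, hkir⟩ := hw
  refine ⟨fun i => ⟨hcont i, fun x hx => ?_⟩, hdir, forall_fin_three_eq_iff.2 hvertex, hkir⟩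
  rw [hode i x hx, neg_add_cancel, Pi.zero_apply, Pi.zero_apply]

theorem solvesInhom_iff :
    SolvesInhom ℓ h μ w Φ D ν φ ↔
      IsStarSolution ℓ (fun i x => h i x ^ 2) (fun i x => -μ * h i x ^ 2)
        (fun i x => Φ i x + ν * h i x ^ 2 * w i x) D φ ∧
      starInner ℓ (fun i x => h i x ^ 2) φ w = 0 := by
  constructor
  · rintro ⟨hcont, hode, hdir, hvertex, hkir, horth⟩
    refine ⟨⟨fun i => ⟨hcont i, fun x hx => ?_⟩, hdir, ?_, hkir⟩, horth⟩
    · linear_combination hode i x hx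
    · exact forall_fin_three_eq_iff.2 hvertex
  · rintro ⟨⟨hedge, hdir, hvertex, hkir⟩, horth⟩
    refine ⟨fun i => (hedge i).contDiff, fun i x hx => ?_, hdir, ?_, hkir, horth⟩
    · linear_combination (hedge i).ode x hx
    · exact forall_fin_three_eq_iff.1 hvertex

end LimitProblem

/-- Existence and uniqueness for the inhomogeneous limit problem at a simple
eigenvalue `μ₀` whose eigenfunction does not vanish at the vertex: there is a unique
number `ν` for which the problem is solvable, and a unique solution orthogonal to
the eigenfunction. -/
theorem limit_fredholm_exists_unique
    (ℓ : Fin 3 → ℝ) (h : Fin 3 → ℝ → ℝ)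
    (hℓ : ∀ i, 0 < ℓ i)
    (hh : ∀ i, ContDiff ℝ 1 (h i))
    (hhpos : ∀ i, ∀ x ∈ Icc 0 (ℓ i), 0 < h i x)
    (μ₀ : ℝ) (w : Fin 3 → ℝ → ℝ)
    (hw : IsLimitEigenpair ℓ h μ₀ w)
    (hw0 : w 0 0 ≠ 0)
    (Φ : Fin 3 → ℝ → ℝ) (hΦ : ∀ i, ContinuousOn (Φ i) (Icc 0 (ℓ i)))
    (D : ℝ) :
    ∃ (ν : ℝ) (φ : Fin 3 → ℝ → ℝ),
      SolvesInhom ℓ h μ₀ w Φ D ν φ ∧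
        ∀ (ν' : ℝ) (φ' : Fin 3 → ℝ → ℝ), SolvesInhom ℓ h μ₀ w Φ D ν' φ' →
          ν' = ν ∧ ∀ i, ∀ x ∈ Icc 0 (ℓ i), φ' i x = φ i x := by
  have hcont : ∀ i, Continuous (h i) := fun i => (hh i).continuous
  simp only [solvesInhom_iff]
  exact limit_fredholm_exists_unique_general hℓ (fun i => (hh i).pow 2)
    (fun i x hx => pow_ne_zero 2 (hhpos i x hx).ne') (by fun_prop) (by fun_prop)
    (fun i x hx => pow_pos (hhpos i x hx) 2) hΦ hw.isStarSolution hw0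
end

section
/- Let (μ, (w₁, w₂, w₃)) and (μ, (v₁, v₂, v₃)) be eigenpairs of the α = 1 limit spectral problem on the star graph with the same eigenvalue μ, and suppose w₁(0) ≠ 0. Then there exists c ∈ ℝ such that v_i(x) = c · w_i(x) for all x ∈ [0, ℓ_i] and i = 1,2,3. In particular, every eigenvalue possessing an eigenfunction that does not vanish at the vertex is simple. -/
open Set

/-- An eigenpair `(μ, (w₁, w₂, w₃))` of the `α = 1` limit spectral problem on the
star graph with constant thicknesses `h i` and concentrated mass `κ` at the vertex. -/
def IsAlphaOneEigenpair (ℓ h : Fin 3 → ℝ) (κ μ : ℝ) (w : Fin 3 → ℝ → ℝ) : Prop :=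
  (∀ i, ContDiff ℝ 2 (w i)) ∧
  (∃ i, ∃ x ∈ Icc 0 (ℓ i), w i x ≠ 0) ∧
  (∀ i, ∀ x ∈ Icc 0 (ℓ i), deriv (deriv (w i)) x = -μ * w i x) ∧
  (∀ i, w i (ℓ i) = 0) ∧
  (w 0 0 = w 1 0 ∧ w 1 0 = w 2 0) ∧
  (∑ i, (h i) ^ 2 * deriv (w i) 0 = -κ * μ * w 0 0)

/-!
On a single edge the space of solutions of `y'' = q y` with `y b = 0` is at most one-dimensional:
a solution with zero Cauchy data at `b` vanishes, so any two are proportional with ratio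
`v' b / w' b`. When `w` does not vanish at the other endpoint `a`, this ratio is `v a / w a`.
On a star graph the vertex values are common to all edges, hence so is the ratio.
-/

theorem lipschitzWith_snd_smul_fst {E : Type*} [NormedAddCommGroup E] [NormedSpace ℝ E]
    {k K : ℝ} (hk : |k| ≤ K) :
    LipschitzWith (max 1 K.toNNReal) fun p : E × E ↦ (p.2, k • p.1) := by
  have hsmul : LipschitzWith K.toNNReal fun p : E × E ↦ k • p.1 :=
    ((lipschitzWith_smul k).comp LipschitzWith.prod_fst).weaken (by
      rw [mul_one]
      exact NNReal.le_toNNReal_of_coe_le hk)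
  exact LipschitzWith.prod_snd.prodMk hsmul

/-- `y` solves `y'' = q y` on `s` and `y'` is its derivative there. Carrying `y'` explicitly, with
derivatives within `s`, makes solutions independent of their values outside `s`. -/
structure IsSchrodingerSolutionOn {E : Type*} [NormedAddCommGroup E] [NormedSpace ℝ E]
    (q : ℝ → ℝ) (s : Set ℝ) (y y' : ℝ → E) : Prop where
  hasDerivWithinAt : ∀ x ∈ s, HasDerivWithinAt y (y' x) s x
  hasDerivWithinAt_deriv : ∀ x ∈ s, HasDerivWithinAt y' (q x • y x) s x

namespace IsSchrodingerSolutionOn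

section NormedSpace

variable {E : Type*} [NormedAddCommGroup E] [NormedSpace ℝ E]
  {q : ℝ → ℝ} {s : Set ℝ} {y y' z z' : ℝ → E} {a b : ℝ}

theorem of_contDiff (hy : ContDiff ℝ 2 y) (hode : ∀ x ∈ s, deriv (deriv y) x = q x • y x) :
    IsSchrodingerSolutionOn q s y (deriv y) where
  hasDerivWithinAt x _ := (hy.differentiable two_ne_zero x).hasDerivAt.hasDerivWithinAt
  hasDerivWithinAt_deriv x hx :=
    hode x hx ▸ (hy.differentiable_deriv_two x).hasDerivAt.hasDerivWithinAt

theorem zero : IsSchrodingerSolutionOn q s (0 : ℝ → E) 0 where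
  hasDerivWithinAt x _ := hasDerivWithinAt_const x s 0
  hasDerivWithinAt_deriv x _ := by
    rw [Pi.zero_apply, smul_zero]
    exact hasDerivWithinAt_const x s 0

theorem const_smul (c : ℝ) (hy : IsSchrodingerSolutionOn q s y y') :
    IsSchrodingerSolutionOn q s (c • y) (c • y') where
  hasDerivWithinAt x hx := (hy.hasDerivWithinAt x hx).const_smul c
  hasDerivWithinAt_deriv x hx := by
    simpa only [Pi.smul_apply, smul_comm c (q x)] using
      (hy.hasDerivWithinAt_deriv x hx).const_smul c

theorem hasDerivWithinAt_prodMk (hy : IsSchrodingerSolutionOn q s y y') {x : ℝ} (hx : x ∈ s) :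
    HasDerivWithinAt (fun x ↦ (y x, y' x)) (y' x, q x • y x) s x :=
  (hy.hasDerivWithinAt x hx).prodMk (hy.hasDerivWithinAt_deriv x hx)

theorem eqOn_of_eq_right (hq : Bornology.IsBounded (q '' Icc a b))
    (hy : IsSchrodingerSolutionOn q (Icc a b) y y')
    (hz : IsSchrodingerSolutionOn q (Icc a b) z z')
    (hb : y b = z b) (hb' : y' b = z' b) : EqOn y z (Icc a b) := by
  obtain ⟨K, hK⟩ := hq.exists_norm_le
  have hlip (x : ℝ) (hx : x ∈ Ioc a b) :
      LipschitzOnWith (max 1 K.toNNReal) (fun p : E × E ↦ (p.2, q x • p.1)) univ :=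
    (lipschitzWith_snd_smul_fst
      (hK _ (mem_image_of_mem q (Ioc_subset_Icc_self hx)))).lipschitzOnWith
  have phase_continuousOn {u u' : ℝ → E} (hu : IsSchrodingerSolutionOn q (Icc a b) u u') :
      ContinuousOn (fun x ↦ (u x, u' x)) (Icc a b) :=
    fun x hx ↦ (hu.hasDerivWithinAt_prodMk hx).continuousWithinAt
  have phase_hasDerivWithinAt_Iic {u u' : ℝ → E}
      (hu : IsSchrodingerSolutionOn q (Icc a b) u u') (x : ℝ) (hx : x ∈ Ioc a b) :
      HasDerivWithinAt (fun x ↦ (u x, u' x)) (u' x, q x • u x) (Iic x) x :=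
    (hu.hasDerivWithinAt_prodMk (Ioc_subset_Icc_self hx)).mono_of_mem_nhdsWithin
      (Icc_mem_nhdsLE_of_mem hx)
  have phase_eqOn : EqOn (fun x ↦ (y x, y' x)) (fun x ↦ (z x, z' x)) (Icc a b) :=
    ODE_solution_unique_of_mem_Icc_left (v := fun x p ↦ (p.2, q x • p.1)) hlip
      (phase_continuousOn hy) (phase_hasDerivWithinAt_Iic hy) (fun _ _ ↦ mem_univ _)
      (phase_continuousOn hz) (phase_hasDerivWithinAt_Iic hz) (fun _ _ ↦ mem_univ _)
      (Prod.ext hb hb')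
  exact fun x hx ↦ congrArg Prod.fst (phase_eqOn hx)

theorem deriv_right_ne_zero (hq : Bornology.IsBounded (q '' Icc a b))
    (hy : IsSchrodingerSolutionOn q (Icc a b) y y') (hb : y b = 0)
    (hne : ∃ x ∈ Icc a b, y x ≠ 0) : y' b ≠ 0 := by
  obtain ⟨x, hx, hyx⟩ := hne
  exact fun hb' ↦ hyx (hy.eqOn_of_eq_right hq zero hb hb' hx)

end NormedSpace

variable {q w w' v v' : ℝ → ℝ} {a b : ℝ}

theorem eqOn_deriv_div_smul (hq : Bornology.IsBounded (q '' Icc a b))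
    (hw : IsSchrodingerSolutionOn q (Icc a b) w w')
    (hv : IsSchrodingerSolutionOn q (Icc a b) v v')
    (hwb : w b = 0) (hvb : v b = 0) (hwb' : w' b ≠ 0) :
    EqOn v ((v' b / w' b) • w) (Icc a b) :=
  hv.eqOn_of_eq_right hq (hw.const_smul (v' b / w' b)) (by simp [hwb, hvb]) (by simp [hwb'])

theorem eqOn_left_div_smul (hq : Bornology.IsBounded (q '' Icc a b))
    (hw : IsSchrodingerSolutionOn q (Icc a b) w w')
    (hv : IsSchrodingerSolutionOn q (Icc a b) v v')
    (hwb : w b = 0) (hvb : v b = 0) (hwa : w a ≠ 0) :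
    EqOn v ((v a / w a) • w) (Icc a b) := by
  intro x hx
  have ha : a ∈ Icc a b := left_mem_Icc.2 (hx.1.trans hx.2)
  have hprop : EqOn v ((v' b / w' b) • w) (Icc a b) :=
    hw.eqOn_deriv_div_smul hq hv hwb hvb (hw.deriv_right_ne_zero hq hwb ⟨a, ha, hwa⟩)
  have hratio : v a / w a = v' b / w' b := (div_eq_iff hwa).2 (hprop ha)
  rw [hratio]
  exact hprop hx

end IsSchrodingerSolutionOn

/-- A solution on a star graph with edges `[0, ℓ i]` glued at `0`: `w i` solves `y'' = q i y` with
derivative `w' i`, vanishes at the free end `ℓ i`, and agrees with the other edges at the vertex. -/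
structure IsDirichletStarSolution {ι : Type*} (ℓ : ι → ℝ) (q w w' : ι → ℝ → ℝ) : Prop where
  isSchrodingerSolutionOn : ∀ i, IsSchrodingerSolutionOn (q i) (Icc 0 (ℓ i)) (w i) (w' i)
  apply_end : ∀ i, w i (ℓ i) = 0
  apply_vertex : ∀ i j, w i 0 = w j 0

theorem IsAlphaOneEigenpair.isDirichletStarSolution {ℓ h : Fin 3 → ℝ} {κ μ : ℝ}
    {w : Fin 3 → ℝ → ℝ} (hw : IsAlphaOneEigenpair ℓ h κ μ w) :
    IsDirichletStarSolution ℓ (fun _ _ ↦ -μ) w (fun i ↦ deriv (w i)) := by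
  obtain ⟨hdiff, -, hode, hend, ⟨h01, h12⟩, -⟩ := hw
  have hvertex : ∀ i, w i 0 = w 0 0 := Fin.forall_fin_succ.2 ⟨rfl, by
    simp [Fin.forall_fin_two, h01, h12]⟩
  exact ⟨fun i ↦ .of_contDiff (hdiff i) (hode i), hend,
    fun i j ↦ (hvertex i).trans (hvertex j).symm⟩

theorem alphaOne_eigenvalue_simple_general {ι : Type*} {ℓ : ι → ℝ} {q w w' v v' : ι → ℝ → ℝ}
    (hq : ∀ i, Bornology.IsBounded (q i '' Icc 0 (ℓ i)))
    (hw : IsDirichletStarSolution ℓ q w w') (hv : IsDirichletStarSolution ℓ q v v')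
    {i₀ : ι} (hw0 : w i₀ 0 ≠ 0) :
    ∃ c : ℝ, ∀ i, ∀ x ∈ Icc 0 (ℓ i), v i x = c * w i x := by
  refine ⟨v i₀ 0 / w i₀ 0, fun i x hx ↦ ?_⟩
  have hedge : EqOn (v i) ((v i 0 / w i 0) • w i) (Icc 0 (ℓ i)) :=
    (hw.isSchrodingerSolutionOn i).eqOn_left_div_smul (hq i) (hv.isSchrodingerSolutionOn i)
      (hw.apply_end i) (hv.apply_end i) (hw.apply_vertex i i₀ ▸ hw0)
  rw [hw.apply_vertex i₀ i, hv.apply_vertex i₀ i]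
  exact hedge hx

/-- Every eigenvalue of the `α = 1` limit spectral problem possessing an
eigenfunction not vanishing at the vertex is simple. -/
theorem alphaOne_eigenvalue_simple
    (ℓ h : Fin 3 → ℝ) (κ : ℝ)
    (hℓ : ∀ i, 0 < ℓ i) (hh : ∀ i, 0 < h i) (hκ : 0 < κ)
    (μ : ℝ) (w v : Fin 3 → ℝ → ℝ)
    (hw : IsAlphaOneEigenpair ℓ h κ μ w)
    (hv : IsAlphaOneEigenpair ℓ h κ μ v)
    (hw0 : w 0 0 ≠ 0) :
    ∃ c : ℝ, ∀ i, ∀ x ∈ Icc 0 (ℓ i), v i x = c * w i x :=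
  alphaOne_eigenvalue_simple_general (fun _ ↦ (isCompact_Icc.image continuous_const).isBounded)
    hw.isDirichletStarSolution hv.isDirichletStarSolution hw0
end

section
/- Let (μ₀, (w₁, w₂, w₃)) be an eigenpair of the α = 1 limit spectral problem on the star graph. Let Φ_i : [0, ℓ_i] → ℝ be continuous (i = 1,2,3) and D, ν ∈ ℝ. Suppose φ_i : [0, ℓ_i] → ℝ are twice continuously differentiable and satisfy: −h_i² φ_i″(x) − μ₀ h_i² φ_i(x) = Φ_i(x) + ν h_i² w_i(x) on [0, ℓ_i]; φ_i(ℓ_i) = 0; φ₁(0) = φ₂(0) = φ₃(0); and Σ_{i=1}^{3} h_i² φ_i′(0) = D − κ μ₀ φ₁(0) − κ ν w₁(0). Then Σ_{i=1}^{3} ∫₀^{ℓ_i} Φ_i(x) w_i(x) dx − D · w₁(0) + ν ( Σ_{i=1}^{3} h_i² ∫₀^{ℓ_i} w_i(x)² dx + κ w₁(0)² ) = 0. -/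
open Set

/-!
The star-graph operator `u ↦ -(aᵢ uᵢ'' + μ aᵢ uᵢ)`, together with the Kirchhoff defect
`∑ aᵢ uᵢ'(0) + κ μ u(0)` at the vertex, is symmetric: integrating by parts twice on every edge
leaves only boundary terms, the Dirichlet ends contribute nothing, and at the vertex the two
`κ μ u(0) v(0)` contributions cancel. Pairing the inhomogeneous solution `φ` with the homogeneous
solution `w` therefore says that the source of `φ`, on the edges and at the vertex together, is
orthogonal to `w`. In that source the perturbation `ν` of the spectral parameter enters as
`ν aᵢ wᵢ` on the edges and as `-κ ν w(0)` at the vertex, which produces the squared weighted norm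
of `w`.
-/

open MeasureTheory

theorem integral_mul_sub_mul_eq_wronskian_sub {A : Type*} [NormedRing A] [NormedAlgebra ℝ A]
    [CompleteSpace A] {a b : ℝ} {u u' u'' v v' v'' : ℝ → A}
    (hu : ∀ x ∈ uIcc a b, HasDerivWithinAt u (u' x) (uIcc a b) x)
    (hu' : ∀ x ∈ uIcc a b, HasDerivWithinAt u' (u'' x) (uIcc a b) x)
    (hu'' : IntervalIntegrable u'' volume a b)
    (hv : ∀ x ∈ uIcc a b, HasDerivWithinAt v (v' x) (uIcc a b) x)
    (hv' : ∀ x ∈ uIcc a b, HasDerivWithinAt v' (v'' x) (uIcc a b) x)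
    (hv'' : IntervalIntegrable v'' volume a b) :
    ∫ x in a..b, (u x * v'' x - u'' x * v x)
      = (u b * v' b - u' b * v b) - (u a * v' a - u' a * v a) := by
  have continuousOn_of {f f' : ℝ → A}
      (hf : ∀ x ∈ uIcc a b, HasDerivWithinAt f (f' x) (uIcc a b) x) : ContinuousOn f (uIcc a b) :=
    fun x hx => (hf x hx).continuousWithinAt
  have parts_uv :=
    intervalIntegral.integral_mul_deriv_eq_deriv_mul_of_hasDerivWithinAt hu hv'
      (continuousOn_of hu').intervalIntegrable hv''
  have parts_vu :=
    intervalIntegral.integral_mul_deriv_eq_deriv_mul_of_hasDerivWithinAt hu' hv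
      hu'' (continuousOn_of hv').intervalIntegrable
  rw [intervalIntegral.integral_sub (hv''.continuousOn_mul (continuousOn_of hu))
    (hu''.mul_continuousOn (continuousOn_of hv)), parts_uv, parts_vu]
  abel

/-- The inhomogeneous boundary value problem with spectral parameter `μ` on a star graph whose
edges `[0, ℓ i]` carry the weights `a i` and are joined at the endpoint `0`, where the mass `κ` is
concentrated: `F` is the source on the edges, `G` the source at the vertex, and `u₀` the common
value of the `u i` at the vertex.

The first two derivatives `u'` and `u''` are parameters, one-sided at the endpoints of an edge, so
that nothing is assumed about `u` outside the graph. Edges are encoded as `uIcc 0 (ℓ i)`, matching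
the domain of the interval integral for either sign of `ℓ i`. -/
structure IsStarSolution_s12 {ι : Type*} [Fintype ι] (ℓ a : ι → ℝ) (κ μ : ℝ) (F : ι → ℝ → ℝ) (G : ℝ)
    (u u' u'' : ι → ℝ → ℝ) (u₀ : ℝ) : Prop where
  hasDerivWithinAt : ∀ i, ∀ x ∈ uIcc 0 (ℓ i),
    HasDerivWithinAt (u i) (u' i x) (uIcc 0 (ℓ i)) x
  hasDerivWithinAt_deriv : ∀ i, ∀ x ∈ uIcc 0 (ℓ i),
    HasDerivWithinAt (u' i) (u'' i x) (uIcc 0 (ℓ i)) x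
  intervalIntegrable_deriv_deriv : ∀ i, IntervalIntegrable (u'' i) volume 0 (ℓ i)
  ode : ∀ i, ∀ x ∈ uIcc 0 (ℓ i), -(a i * u'' i x) - μ * a i * u i x = F i x
  dirichlet : ∀ i, u i (ℓ i) = 0
  vertex : ∀ i, u i 0 = u₀
  kirchhoff : ∑ i, a i * u' i 0 = G - κ * μ * u₀

namespace IsStarSolution_s12

variable {ι : Type*} [Fintype ι] {ℓ a : ι → ℝ} {κ μ : ℝ} {F E : ι → ℝ → ℝ} {G H : ℝ}
  {u u' u'' v v' v'' : ι → ℝ → ℝ} {u₀ v₀ : ℝ}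

theorem of_contDiff (hu : ∀ i, ContDiff ℝ 2 (u i))
    (ode : ∀ i, ∀ x ∈ uIcc 0 (ℓ i),
      -(a i * deriv (deriv (u i)) x) - μ * a i * u i x = F i x)
    (dirichlet : ∀ i, u i (ℓ i) = 0) (vertex : ∀ i, u i 0 = u₀)
    (kirchhoff : ∑ i, a i * deriv (u i) 0 = G - κ * μ * u₀) :
    IsStarSolution_s12 ℓ a κ μ F G u (fun i => deriv (u i)) (fun i => deriv (deriv (u i))) u₀ where
  hasDerivWithinAt i x _ := ((hu i).differentiable two_ne_zero x).hasDerivAt.hasDerivWithinAt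
  hasDerivWithinAt_deriv i x _ := ((hu i).differentiable_deriv_two x).hasDerivAt.hasDerivWithinAt
  intervalIntegrable_deriv_deriv i :=
    ((hu i).iterate_deriv' 0 2).continuous.intervalIntegrable 0 (ℓ i)
  ode := ode
  dirichlet := dirichlet
  vertex := vertex
  kirchhoff := kirchhoff

theorem continuousOn_s12 (hu : IsStarSolution_s12 ℓ a κ μ F G u u' u'' u₀) (i : ι) :
    ContinuousOn (u i) (uIcc 0 (ℓ i)) :=
  fun x hx => (hu.hasDerivWithinAt i x hx).continuousWithinAt

theorem intervalIntegrable_source (hu : IsStarSolution_s12 ℓ a κ μ F G u u' u'' u₀) (i : ι) :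
    IntervalIntegrable (F i) volume 0 (ℓ i) :=
  (((hu.intervalIntegrable_deriv_deriv i).const_mul (a i)).neg.sub
    ((hu.continuousOn_s12 i).intervalIntegrable.const_mul (μ * a i))).congr_uIoo
      fun x hx => hu.ode i x (uIoo_subset_uIcc_self hx)

theorem integral_source_mul_sub_mul_source
    (hu : IsStarSolution_s12 ℓ a κ μ F G u u' u'' u₀)
    (hv : IsStarSolution_s12 ℓ a κ μ E H v v' v'' v₀) (i : ι) :
    ∫ x in 0..ℓ i, (F i x * v i x - u i x * E i x) = a i * u' i 0 * v₀ - u₀ * (a i * v' i 0) := by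
  have green := integral_mul_sub_mul_eq_wronskian_sub
    (hu.hasDerivWithinAt i) (hu.hasDerivWithinAt_deriv i) (hu.intervalIntegrable_deriv_deriv i)
    (hv.hasDerivWithinAt i) (hv.hasDerivWithinAt_deriv i) (hv.intervalIntegrable_deriv_deriv i)
  calc ∫ x in 0..ℓ i, (F i x * v i x - u i x * E i x)
      = ∫ x in 0..ℓ i, a i * (u i x * v'' i x - u'' i x * v i x) :=
        intervalIntegral.integral_congr fun x hx => by
          simp only [← hu.ode i x hx, ← hv.ode i x hx]
          ring
    _ = a i * u' i 0 * v₀ - u₀ * (a i * v' i 0) := by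
        rw [intervalIntegral.integral_const_mul, green, hu.dirichlet, hv.dirichlet, hu.vertex,
          hv.vertex]
        ring

theorem sum_integral_source_mul_sub_mul_source
    (hu : IsStarSolution_s12 ℓ a κ μ F G u u' u'' u₀)
    (hv : IsStarSolution_s12 ℓ a κ μ E H v v' v'' v₀) :
    ∑ i, ∫ x in 0..ℓ i, (F i x * v i x - u i x * E i x) = G * v₀ - u₀ * H := by
  simp only [hu.integral_source_mul_sub_mul_source hv, Finset.sum_sub_distrib, ← Finset.sum_mul,
    ← Finset.mul_sum, hu.kirchhoff, hv.kirchhoff]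
  ring

theorem sum_integral_source_mul
    (hu : IsStarSolution_s12 ℓ a κ μ F G u u' u'' u₀)
    (hv : IsStarSolution_s12 ℓ a κ μ 0 0 v v' v'' v₀) :
    ∑ i, ∫ x in 0..ℓ i, F i x * v i x = G * v₀ := by
  simpa using hu.sum_integral_source_mul_sub_mul_source hv

end IsStarSolution_s12

theorem forall_eq_apply_zero_of_fin_three {α : Type*} {f : Fin 3 → α}
    (hf : f 0 = f 1 ∧ f 1 = f 2) (i : Fin 3) : f i = f 0 := by
  fin_cases i
  exacts [rfl, hf.1.symm, (hf.1.trans hf.2).symm]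

theorem IsAlphaOneEigenpair.isStarSolution {ℓ h : Fin 3 → ℝ} {κ μ : ℝ} {w : Fin 3 → ℝ → ℝ}
    (hℓ : ∀ i, 0 ≤ ℓ i) (hw : IsAlphaOneEigenpair ℓ h κ μ w) :
    IsStarSolution_s12 ℓ (fun i => h i ^ 2) κ μ 0 0 w (fun i => deriv (w i))
      (fun i => deriv (deriv (w i))) (w 0 0) := by
  obtain ⟨regular, -, ode, dirichlet, vertex, kirchhoff⟩ := hw
  refine .of_contDiff regular (fun i x hx => ?_) dirichlet
    (forall_eq_apply_zero_of_fin_three (f := fun i => w i 0) vertex) (by linarith)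
  rw [ode i x (uIcc_of_le (hℓ i) ▸ hx), Pi.zero_apply, Pi.zero_apply]
  ring

theorem alphaOne_fredholm_compatibility_general {ι : Type*} [Fintype ι] {ℓ a : ι → ℝ}
    {κ μ D ν : ℝ} {Φ w w' w'' φ φ' φ'' : ι → ℝ → ℝ} {w₀ φ₀ : ℝ}
    (hw : IsStarSolution_s12 ℓ a κ μ 0 0 w w' w'' w₀)
    (hφ : IsStarSolution_s12 ℓ a κ μ (fun i x => Φ i x + ν * a i * w i x) (D - κ * ν * w₀)
      φ φ' φ'' φ₀) :
    (∑ i, ∫ x in 0..ℓ i, Φ i x * w i x) - D * w₀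
      + ν * ((∑ i, a i * ∫ x in 0..ℓ i, w i x ^ 2) + κ * w₀ ^ 2) = 0 := by
  have integral_eq (i : ι) : ∫ x in 0..ℓ i, Φ i x * w i x
      = (∫ x in 0..ℓ i, (Φ i x + ν * a i * w i x) * w i x)
        - ν * (a i * ∫ x in 0..ℓ i, w i x ^ 2) := by
    have integrable_source_mul :=
      (hφ.intervalIntegrable_source i).mul_continuousOn (hw.continuousOn_s12 i)
    have integrable_sq : IntervalIntegrable (fun x => ν * a i * w i x ^ 2) volume 0 (ℓ i) :=
      ((hw.continuousOn_s12 i).pow 2).intervalIntegrable.const_mul (ν * a i)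
    rw [← mul_assoc, ← intervalIntegral.integral_const_mul,
      ← intervalIntegral.integral_sub integrable_source_mul integrable_sq]
    congr! 2 with x
    ring
  simp only [integral_eq, Finset.sum_sub_distrib, ← Finset.mul_sum, hφ.sum_integral_source_mul hw]
  ring

/-- Fredholm compatibility condition for the inhomogeneous problem associated with
the `α = 1` limit spectral problem, where both the differential equations and the
vertex condition carry the spectral parameter. -/
theorem alphaOne_fredholm_compatibility
    (ℓ h : Fin 3 → ℝ) (κ : ℝ)
    (hℓ : ∀ i, 0 < ℓ i) (hh : ∀ i, 0 < h i) (hκ : 0 < κ)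
    (μ₀ : ℝ) (w : Fin 3 → ℝ → ℝ)
    (hw : IsAlphaOneEigenpair ℓ h κ μ₀ w)
    (Φ : Fin 3 → ℝ → ℝ) (hΦ : ∀ i, ContinuousOn (Φ i) (Icc 0 (ℓ i)))
    (D ν : ℝ) (φ : Fin 3 → ℝ → ℝ)
    (hφreg : ∀ i, ContDiff ℝ 2 (φ i))
    (hode : ∀ i, ∀ x ∈ Icc 0 (ℓ i),
      -((h i) ^ 2 * deriv (deriv (φ i)) x) - μ₀ * (h i) ^ 2 * φ i x
        = Φ i x + ν * (h i) ^ 2 * w i x)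
    (hbc : ∀ i, φ i (ℓ i) = 0)
    (hvertex : φ 0 0 = φ 1 0 ∧ φ 1 0 = φ 2 0)
    (hkirchhoff : ∑ i, (h i) ^ 2 * deriv (φ i) 0
      = D - κ * μ₀ * φ 0 0 - κ * ν * w 0 0) :
    (∑ i, ∫ x in (0 : ℝ)..(ℓ i), Φ i x * w i x) - D * w 0 0
      + ν * ((∑ i, (h i) ^ 2 * ∫ x in (0 : ℝ)..(ℓ i), (w i x) ^ 2)
        + κ * (w 0 0) ^ 2) = 0 :=
  alphaOne_fredholm_compatibility_general (hw.isStarSolution fun i => (hℓ i).le)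
    (.of_contDiff hφreg (fun i x hx => hode i x (uIcc_of_le (hℓ i).le ▸ hx)) hbc
      (forall_eq_apply_zero_of_fin_three (f := fun i => φ i 0) hvertex) (by linarith))
end

section
/- Let K ≥ 2 be an integer, ℓ > 0, μ₀, μ₁, …, μ_K real numbers, and w₀, w₁, …, w_K : ℝ → ℝ infinitely differentiable functions satisfying, for every k = 0, 1, …, K, the identity −w_k″(x) = Σ_{m=0}^{k} μ_m w_{k−m}(x) for all x. For 0 ≤ k ≤ K define Ψ_k(ξ) = Σ_{j=1}^{k} (ξ^j / j!) · w_{k−j}^{(j)}(0) (so Ψ₀ ≡ 0) and G_k(ξ) = w_k(0) + Ψ_k(ξ). Then for every k with 2 ≤ k ≤ K and every ξ ∈ ℝ: Ψ_k″(ξ) = −Σ_{m=0}^{k−2} μ_m G_{k−2−m}(ξ). -/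
/-- The Taylor polynomial `Ψ_k(ξ) = ∑_{j=1}^{k} (ξ^j / j!) w_{k-j}^{(j)}(0)`
prescribing the polynomial growth at infinity of the inner (node) asymptotic
terms. -/
noncomputable def PsiFun (w : ℕ → ℝ → ℝ) (k : ℕ) (ξ : ℝ) : ℝ :=
  ∑ j ∈ Finset.Icc 1 k, ξ ^ j / (Nat.factorial j : ℝ) * iteratedDeriv j (w (k - j)) 0

/-- `G_k(ξ) = w_k(0) + Ψ_k(ξ)`. -/
noncomputable def GFun (w : ℕ → ℝ → ℝ) (k : ℕ) (ξ : ℝ) : ℝ :=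
  w k 0 + PsiFun w k ξ

/- Up to its constant term, `Ψ_k` is the polynomial `G_k` whose `i`-th derivative at the origin is
`w_{k-i}^{(i)}(0)`. Differentiating it twice shifts this sequence of derivatives by two, to
`w_{k-2-i}^{(i+2)}(0)`, and the equation for `w_{k-2-i}` differentiated `i` times at the origin
rewrites these numbers through the derivatives defining `G_0, …, G_{k-2}`. -/

open Filter Topology

section TaylorSum

variable {𝕜 E : Type*} [NontriviallyNormedField 𝕜] [NormedAddCommGroup E] [NormedSpace 𝕜 E]

/-- The polynomial `∑_{i<n} (ξ^i / i!) c_i` with prescribed derivatives `c_i` at the origin. The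
`c_i` need not be the derivatives of a single function: for `G_k` they are those of the different
`w_{k-i}`. -/
noncomputable def taylorSum (c : ℕ → E) (n : ℕ) (ξ : 𝕜) : E :=
  ∑ i ∈ Finset.range n, (ξ ^ i / (Nat.factorial i : 𝕜)) • c i

theorem hasDerivAt_pow_succ_div_factorial [CharZero 𝕜] (i : ℕ) (ξ : 𝕜) :
    HasDerivAt (fun ξ : 𝕜 => ξ ^ (i + 1) / (Nat.factorial (i + 1) : 𝕜))
      (ξ ^ i / (Nat.factorial i : 𝕜)) ξ := by
  have hi : (Nat.factorial i : 𝕜) ≠ 0 := Nat.cast_ne_zero.2 i.factorial_ne_zero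
  have hi' : (i : 𝕜) + 1 ≠ 0 := Nat.cast_add_one_ne_zero i
  refine ((hasDerivAt_pow (i + 1) ξ).div_const _).congr_deriv ?_
  rw [Nat.factorial_succ]
  push_cast
  field_simp

theorem deriv_taylorSum_succ [CharZero 𝕜] (c : ℕ → E) (n : ℕ) :
    deriv (taylorSum c (n + 1) : 𝕜 → E) = taylorSum (fun i => c (i + 1)) n := by
  funext ξ
  have split_constant : (taylorSum c (n + 1) : 𝕜 → E) = fun ξ =>
      ∑ i ∈ Finset.range n, (ξ ^ (i + 1) / (Nat.factorial (i + 1) : 𝕜)) • c (i + 1) +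
        (ξ ^ 0 / (Nat.factorial 0 : 𝕜)) • c 0 :=
    funext fun ξ => Finset.sum_range_succ' _ n
  simp only [split_constant, pow_zero, deriv_add_const]
  exact (HasDerivAt.fun_sum fun i _ =>
    (hasDerivAt_pow_succ_div_factorial i ξ).smul_const (c (i + 1))).deriv

end TaylorSum

theorem iteratedDeriv_add_two_eq_sum {𝕜 E ι : Type*} [NontriviallyNormedField 𝕜]
    [NormedAddCommGroup E] [NormedSpace 𝕜 E] {s : Finset ι} {a : ι → 𝕜} {f : 𝕜 → E}
    {g : ι → 𝕜 → E} {x : 𝕜} {i : ℕ} (hg : ∀ m ∈ s, ContDiffAt 𝕜 i (g m) x)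
    (hf : deriv (deriv f) =ᶠ[𝓝 x] fun y => ∑ m ∈ s, a m • g m y) :
    iteratedDeriv (i + 2) f x = ∑ m ∈ s, a m • iteratedDeriv i (g m) x := by
  rw [iteratedDeriv_succ', iteratedDeriv_succ', hf.iteratedDeriv_eq,
    iteratedDeriv_fun_sum fun m hm => (hg m hm).const_smul (a m)]
  exact Finset.sum_congr rfl fun m _ => iteratedDeriv_fun_const_smul_field (a m) (g m)

theorem GFun_eq_taylorSum (w : ℕ → ℝ → ℝ) (k : ℕ) :
    GFun w k = taylorSum (fun i => iteratedDeriv i (w (k - i)) 0) (k + 1) := by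
  funext ξ
  have constant_term : (ξ ^ 0 / (Nat.factorial 0 : ℝ)) • iteratedDeriv 0 (w (k - 0)) 0 = w k 0 := by
    simp
  rw [taylorSum, Finset.range_eq_Ico, Finset.sum_eq_sum_Ico_succ_bot k.succ_pos, constant_term]
  rfl

theorem deriv_PsiFun (w : ℕ → ℝ → ℝ) (k : ℕ) : deriv (PsiFun w k) = deriv (GFun w k) :=
  funext fun _ => (deriv_const_add _).symm

theorem deriv_deriv_PsiFun_add_two (w : ℕ → ℝ → ℝ) (n : ℕ) :
    deriv (deriv (PsiFun w (n + 2))) =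
      taylorSum (fun i => iteratedDeriv (i + 2) (w (n - i)) 0) (n + 1) := by
  simp only [deriv_PsiFun, GFun_eq_taylorSum, deriv_taylorSum_succ, add_assoc, Nat.reduceAdd,
    Nat.add_sub_add_right]

theorem sum_mul_GFun (μ : ℕ → ℝ) (w : ℕ → ℝ → ℝ) (n : ℕ) (ξ : ℝ) :
    ∑ m ∈ Finset.range (n + 1), μ m * GFun w (n - m) ξ =
      taylorSum (fun i => ∑ m ∈ Finset.range (n - i + 1),
        μ m * iteratedDeriv i (w (n - i - m)) 0) (n + 1) ξ := by
  simp only [GFun_eq_taylorSum, taylorSum, smul_eq_mul, Finset.mul_sum]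
  rw [Finset.sum_comm' (t' := Finset.range (n + 1)) (s' := fun i => Finset.range (n - i + 1))
    (by simp only [Finset.mem_range]; omega)]
  refine Finset.sum_congr rfl fun i _ => Finset.sum_congr rfl fun m _ => ?_
  rw [Nat.sub_right_comm n m i, mul_left_comm]

/-- The order `n + 2 - p` is the highest order of a derivative of `w_p` occurring in `Ψ_{n+2}`. -/
theorem psi_second_derivative_identity_general (μ : ℕ → ℝ) (w : ℕ → ℝ → ℝ) (n : ℕ)
    (hw : ∀ p ≤ n, ContDiffAt ℝ (n + 2 - p : ℕ) (w p) 0)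
    (hode : ∀ p ≤ n, ∀ᶠ x in 𝓝 (0 : ℝ),
      -(deriv (deriv (w p)) x) = ∑ m ∈ Finset.range (p + 1), μ m * w (p - m) x)
    (ξ : ℝ) :
    deriv (deriv (PsiFun w (n + 2))) ξ
      = -∑ m ∈ Finset.range (n + 1), μ m * GFun w (n - m) ξ := by
  have jet_recursion : ∀ i ≤ n, iteratedDeriv (i + 2) (w (n - i)) 0 =
      -∑ m ∈ Finset.range (n - i + 1), μ m * iteratedDeriv i (w (n - i - m)) 0 := by
    intro i hi
    have smooth : ∀ m ∈ Finset.range (n - i + 1), ContDiffAt ℝ i (w (n - i - m)) 0 :=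
      fun m _ => (hw (n - i - m) (by omega)).of_le (by exact_mod_cast (by omega))
    have ode : deriv (deriv (w (n - i))) =ᶠ[𝓝 0]
        fun x => ∑ m ∈ Finset.range (n - i + 1), (-μ m) • w (n - i - m) x := by
      filter_upwards [hode (n - i) (Nat.sub_le n i)] with x hx
      simp only [smul_eq_mul, neg_mul, Finset.sum_neg_distrib, ← hx, neg_neg]
    simpa only [smul_eq_mul, neg_mul, Finset.sum_neg_distrib] using
      iteratedDeriv_add_two_eq_sum smooth ode
  rw [deriv_deriv_PsiFun_add_two, sum_mul_GFun, taylorSum, taylorSum, ← Finset.sum_neg_distrib]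
  refine Finset.sum_congr rfl fun i hi => ?_
  rw [jet_recursion i (Finset.mem_range_succ_iff.1 hi), smul_neg]

/-- Identity (3.39) of the paper: the Taylor polynomials `Ψ_k` of the regular
asymptotic terms satisfy `Ψ_k″(ξ) = -∑_{m=0}^{k-2} μ_m G_{k-2-m}(ξ)` whenever the
regular terms satisfy `-w_k″ = ∑_{m=0}^{k} μ_m w_{k-m}`. -/
theorem psi_second_derivative_identity
    (K : ℕ) (hK : 2 ≤ K) (ℓ : ℝ) (hℓ : 0 < ℓ)
    (μ : ℕ → ℝ) (w : ℕ → ℝ → ℝ)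
    (hw : ∀ k ≤ K, ContDiff ℝ (⊤ : ℕ∞) (w k))
    (hode : ∀ k ≤ K, ∀ x : ℝ,
      -(deriv (deriv (w k)) x) = ∑ m ∈ Finset.range (k + 1), μ m * w (k - m) x) :
    ∀ k, 2 ≤ k → k ≤ K → ∀ ξ : ℝ,
      deriv (deriv (PsiFun w k)) ξ
        = -∑ m ∈ Finset.range (k - 1), μ m * GFun w (k - 2 - m) ξ := by
  intro k hk hkK
  obtain ⟨n, rfl⟩ := Nat.exists_eq_add_of_le' hk
  exact psi_second_derivative_identity_general μ w n
    (fun p hp => (contDiff_infty.1 (hw p (by omega)) _).contDiffAt)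
    (fun p hp => .of_forall (hode p (by omega)))
end
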